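/- arXiv:1508.04836 — 4 statements merged into one kernel-verified Lean document; each statement's English description precedes it below -/
import Mathlib

section
/- Let (Ω,P,π) be a finite irreducible Markov chain (reversibility is not assumed). Then for every natural number t, every real 0 < s ≤ √t and every probability measure μ on Ω: d_c(t + s√t, μ) ≤ d_ave(t, μ) + e^{−s²/4}. -/
open Matrix Filter Asymptotics

/-- `P` is a stochastic matrix. -/
def IsStochastic {Ω : Type*} [Fintype Ω] (P : Matrix Ω Ω ℝ) : Prop :=
  (∀ x y, 0 ≤ P x y) ∧ ∀ x, ∑ y, P x y = 1

/-- `P` is irreducible. -/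
def IsIrreducibleMatrix {Ω : Type*} [Fintype Ω] [DecidableEq Ω] (P : Matrix Ω Ω ℝ) : Prop :=
  ∀ x y, ∃ n : ℕ, 0 < (P ^ n) x y

/-- `μ` is a probability vector. -/
def IsProbVec {Ω : Type*} [Fintype Ω] (μ : Ω → ℝ) : Prop :=
  (∀ x, 0 ≤ μ x) ∧ ∑ x, μ x = 1

/-- The chain `(P, pi)` is reversible. -/
def IsReversible {Ω : Type*} [Fintype Ω] (P : Matrix Ω Ω ℝ) (pi : Ω → ℝ) : Prop :=
  ∀ x y, pi x * P x y = pi y * P y x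

/-- A finite irreducible Markov chain `P` with stationary distribution `pi`. -/
def IsMC {Ω : Type*} [Fintype Ω] [DecidableEq Ω] (P : Matrix Ω Ω ℝ) (pi : Ω → ℝ) : Prop :=
  IsStochastic P ∧ IsIrreducibleMatrix P ∧ IsProbVec pi ∧ pi ᵥ* P = pi

/-- A finite irreducible reversible Markov chain `P` with stationary distribution `pi`. -/
def IsRevMC {Ω : Type*} [Fintype Ω] [DecidableEq Ω] (P : Matrix Ω Ω ℝ) (pi : Ω → ℝ) : Prop :=
  IsMC P pi ∧ IsReversible P pi

/-- Total-variation distance between two measures on a finite set. -/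
noncomputable def tvDist {Ω : Type*} [Fintype Ω] (μ ν : Ω → ℝ) : ℝ :=
  (∑ x, |μ x - ν x|) / 2

/-- The lazy version `(I + P)/2` of `P`. -/
noncomputable def lazyM {Ω : Type*} [Fintype Ω] [DecidableEq Ω] (P : Matrix Ω Ω ℝ) :
    Matrix Ω Ω ℝ :=
  (2 : ℝ)⁻¹ • (1 + P)

/-- `d_c(t, μ)`: TV distance from stationarity of the continuous-time chain at time `t`,
started from `μ`. -/
noncomputable def contDist {Ω : Type*} [Fintype Ω] [DecidableEq Ω] (P : Matrix Ω Ω ℝ) (pi : Ω → ℝ)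
    (t : ℝ) (μ : Ω → ℝ) : ℝ :=
  tvDist (fun y => ∑' k : ℕ, Real.exp (-t) * t ^ k / (Nat.factorial k) * (μ ᵥ* (P ^ k)) y) pi

/-- `d_L(t, μ)`: TV distance from stationarity of the lazy chain at (discrete) time `t`,
started from `μ`. -/
noncomputable def lazyDist {Ω : Type*} [Fintype Ω] [DecidableEq Ω] (P : Matrix Ω Ω ℝ)
    (pi : Ω → ℝ) (t : ℝ) (μ : Ω → ℝ) : ℝ :=
  tvDist (μ ᵥ* (lazyM P ^ ⌊t⌋₊)) pi

/-- `d_ave(t, μ)`: TV distance from stationarity of the averaged chain at (discrete) time `t`,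
started from `μ`. -/
noncomputable def aveDist {Ω : Type*} [Fintype Ω] [DecidableEq Ω] (P : Matrix Ω Ω ℝ) (pi : Ω → ℝ)
    (t : ℝ) (μ : Ω → ℝ) : ℝ :=
  tvDist (fun y => ((μ ᵥ* (P ^ ⌊t⌋₊)) y + (μ ᵥ* (P ^ (⌊t⌋₊ + 1))) y) / 2) pi

/-- The point mass at `x`. -/
noncomputable def deltaMass {Ω : Type*} [DecidableEq Ω] (x : Ω) : Ω → ℝ :=
  fun y => if y = x then 1 else 0

/-- Worst-case continuous-time distance `d_c(t)`. -/
noncomputable def contDistMax {Ω : Type*} [Fintype Ω] [DecidableEq Ω] (P : Matrix Ω Ω ℝ)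
    (pi : Ω → ℝ) (t : ℝ) : ℝ :=
  ⨆ x : Ω, contDist P pi t (deltaMass x)

/-- Worst-case lazy distance `d_L(t)`. -/
noncomputable def lazyDistMax {Ω : Type*} [Fintype Ω] [DecidableEq Ω] (P : Matrix Ω Ω ℝ)
    (pi : Ω → ℝ) (t : ℝ) : ℝ :=
  ⨆ x : Ω, lazyDist P pi t (deltaMass x)

/-- Worst-case averaged distance `d_ave(t)`. -/
noncomputable def aveDistMax {Ω : Type*} [Fintype Ω] [DecidableEq Ω] (P : Matrix Ω Ω ℝ)
    (pi : Ω → ℝ) (t : ℝ) : ℝ :=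
  ⨆ x : Ω, aveDist P pi t (deltaMass x)

/-- `φ_{α,C}(t) = t + ⌈C t^{(1+2α)/2} √(α log t)⌉`. -/
noncomputable def phiAC (α C t : ℝ) : ℝ :=
  t + ((⌈C * t ^ ((1 + 2 * α) / 2) * Real.sqrt (α * Real.log t)⌉ : ℤ) : ℝ)

/-- `ψ_{α,C}(x) = min (1, x + C |log(2x)|^{-α})`. -/
noncomputable def psiAC (α C x : ℝ) : ℝ :=
  min 1 (x + C * |Real.log (2 * x)| ^ (-α))

/-- `t_c(ε)`, the `ε`-mixing time of the continuous-time chain. -/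
noncomputable def contMix {Ω : Type*} [Fintype Ω] [DecidableEq Ω] (P : Matrix Ω Ω ℝ)
    (pi : Ω → ℝ) (ε : ℝ) : ℝ :=
  sInf {t : ℝ | 0 ≤ t ∧ contDistMax P pi t ≤ ε}

/-- `t_L(ε)`, the `ε`-mixing time of the lazy chain. -/
noncomputable def lazyMix {Ω : Type*} [Fintype Ω] [DecidableEq Ω] (P : Matrix Ω Ω ℝ)
    (pi : Ω → ℝ) (ε : ℝ) : ℕ :=
  sInf {t : ℕ | lazyDistMax P pi t ≤ ε}

/-- `t_ave(ε)`, the `ε`-mixing time of the averaged chain. -/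
noncomputable def aveMix {Ω : Type*} [Fintype Ω] [DecidableEq Ω] (P : Matrix Ω Ω ℝ)
    (pi : Ω → ℝ) (ε : ℝ) : ℕ :=
  sInf {t : ℕ | aveDistMax P pi t ≤ ε}


/-- Alternating partial sums. -/
def altA (a : ℕ → ℝ) : ℕ → ℝ
  | 0 => a 0
  | n + 1 => a (n + 1) - altA a n

lemma altA_bounds (a : ℕ → ℝ) (h0 : 0 ≤ a 0) (n : ℕ) (hm : ∀ k < n, a k ≤ a (k + 1)) :
    0 ≤ altA a n ∧ altA a n ≤ a n := by
  induction n with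
  | zero => simp [altA, h0]
  | succ n ih =>
    have := ih (fun k hk => hm k (by omega))
    have h := hm n (by omega)
    simp only [altA]
    constructor <;> linarith

lemma altA_eq (a : ℕ → ℝ) (n : ℕ) :
    altA a n = (-1) ^ n * ∑ i ∈ Finset.range (n + 1), (-1) ^ i * a i := by
  induction n with
  | zero => simp [altA]
  | succ n ih =>
    rw [Finset.sum_range_succ, altA, ih, mul_add, ← mul_assoc ((-1) ^ (n + 1)) ((-1) ^ (n + 1)),
      ← mul_pow]
    simp only [mul_neg, mul_one, neg_neg, one_pow, one_mul, pow_succ]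
    ring

lemma up_bound (a v : ℕ → ℝ) (D : ℝ) (h0 : 0 ≤ a 0) (hv : ∀ k, |v k + v (k + 1)| ≤ 2 * D)
    (n : ℕ) (hm : ∀ k < n, a k ≤ a (k + 1)) :
    |∑ k ∈ Finset.range (n + 1), a k * v k - altA a n * v n|
      ≤ D * (∑ k ∈ Finset.range (n + 1), a k - altA a n) := by
  induction n with
  | zero => simp [altA]
  | succ n ih =>
    have h1 := ih (fun k hk => hm k (by omega))
    have hA := (altA_bounds a h0 n (fun k hk => hm k (by omega))).1
    rw [Finset.sum_range_succ, Finset.sum_range_succ _ (n + 1)]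
    simp only [altA]
    have e : ∑ k ∈ Finset.range (n + 1), a k * v k + a (n + 1) * v (n + 1) -
        (a (n + 1) - altA a n) * v (n + 1) =
        (∑ k ∈ Finset.range (n + 1), a k * v k - altA a n * v n)
          + altA a n * (v n + v (n + 1)) := by ring
    rw [e]
    refine (abs_add_le _ _).trans ?_
    rw [abs_mul, abs_of_nonneg hA]
    have := mul_le_mul_of_nonneg_left (hv n) hA
    linarith

lemma down_bound (a v : ℕ → ℝ) (D : ℝ) (hs : Summable a)
    (hv1 : ∀ k, |v k| ≤ 1)
    (hv : ∀ k, |v k + v (k + 1)| ≤ 2 * D) (hm : Antitone a) :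
    ∃ B : ℝ, B = ∑' i, (-1) ^ i * a i ∧ 0 ≤ B ∧
      |∑' k, a k * v k - B * v 0| ≤ D * (∑' k, a k - B) := by
  have hlim : Tendsto a atTop (nhds 0) := hs.tendsto_atTop_zero
  have hpos : ∀ k, 0 ≤ a k := fun k => hm.le_of_tendsto hlim k
  have hsalt : Summable fun i => (-1 : ℝ) ^ i * a i := by
    refine Summable.of_norm_bounded hs (fun i => ?_)
    simp [abs_mul, abs_of_nonneg (hpos i)]
  have hsaltk : ∀ k, Summable fun i => (-1 : ℝ) ^ i * a (i + k) := by
    intro k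
    refine Summable.of_norm_bounded ((summable_nat_add_iff k).2 hs) (fun i => ?_)
    simp [abs_mul, abs_of_nonneg (hpos (i + k))]
  set B : ℕ → ℝ := fun k => ∑' i, (-1) ^ i * a (i + k) with hB
  have hrec : ∀ k, B k + B (k + 1) = a k := by
    intro k
    simp only [hB]
    rw [(hsaltk k).tsum_eq_zero_add]
    have : ∀ i, (-1 : ℝ) ^ (i + 1) * a (i + 1 + k) = - ((-1) ^ i * a (i + (k + 1))) := by
      intro i
      rw [show i + 1 + k = i + (k + 1) by ring]; ring
    simp only [this, tsum_neg]
    simp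
  have hBn : ∀ k, 0 ≤ B k := by
    intro k
    have hanti : Antitone fun i => a (i + k) := fun i j h => hm (by omega)
    have := hanti.alternating_series_le_tendsto (hsaltk k).hasSum.tendsto_sum_nat 0
    simpa using this
  have hBs : Summable B := by
    refine Summable.of_nonneg_of_le hBn (fun k => ?_) hs
    have := hrec k; have := hBn (k + 1); linarith
  have hBs1 : Summable fun k => B (k + 1) := (summable_nat_add_iff 1).2 hBs
  have bsum : ∀ u : ℕ → ℝ, Summable u → ∀ w : ℕ → ℝ, (∀ k, |w k| ≤ 1) →
      Summable fun k => u k * w k := by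
    intro u hu w hw
    refine Summable.of_norm_bounded hu.abs (fun i => ?_)
    rw [Real.norm_eq_abs, abs_mul]
    exact mul_le_of_le_one_right (abs_nonneg _) (hw i)
  have e1 : ∑' k, a k * v k = ∑' k, B k * v k + ∑' k, B (k + 1) * v k := by
    rw [← Summable.tsum_add (bsum _ hBs _ hv1) (bsum _ hBs1 _ hv1)]
    refine tsum_congr (fun k => ?_)
    rw [← hrec k]; ring
  have s2 : Summable fun k => B (k + 1) * v (k + 1) := bsum _ hBs1 _ (fun k => hv1 _)
  have e2 : ∑' k, B k * v k = B 0 * v 0 + ∑' k, B (k + 1) * v (k + 1) :=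
    (bsum _ hBs _ hv1).tsum_eq_zero_add
  have e3 : ∑' k, a k = 2 * (∑' k, B (k + 1)) + B 0 := by
    have : ∑' k, a k = ∑' k, B k + ∑' k, B (k + 1) := by
      rw [← Summable.tsum_add hBs hBs1]
      exact tsum_congr (fun k => (hrec k).symm)
    rw [this, hBs.tsum_eq_zero_add]; ring
  refine ⟨B 0, by simp [hB], hBn 0, ?_⟩
  have e4 : ∑' k, a k * v k - B 0 * v 0 = ∑' k, B (k + 1) * (v k + v (k + 1)) := by
    rw [e1, e2]
    have : ∑' k, B (k + 1) * (v k + v (k + 1)) =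
        ∑' k, B (k + 1) * v k + ∑' k, B (k + 1) * v (k + 1) := by
      rw [← Summable.tsum_add (bsum _ hBs1 _ hv1) s2]
      exact tsum_congr (fun k => by ring)
    rw [this]; ring
  rw [e4, e3]
  have := tsum_of_norm_bounded (f := fun k => B (k + 1) * (v k + v (k + 1)))
    (hBs1.mul_right (2 * D)).hasSum (fun k => by
      rw [Real.norm_eq_abs, abs_mul, abs_of_nonneg (hBn _)]
      exact mul_le_mul_of_nonneg_left (hv k) (hBn _))
  rw [tsum_mul_right, Real.norm_eq_abs] at this
  linarith

/-- Core estimate for unimodal sequences. -/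
lemma unimodal_bound (a v : ℕ → ℝ) (D : ℝ) (hs : Summable a) (hp : ∀ k, 0 ≤ a k)
    (hv1 : ∀ k, |v k| ≤ 1) (hv : ∀ k, |v k + v (k + 1)| ≤ 2 * D) (n : ℕ)
    (hup : ∀ k < n, a k ≤ a (k + 1)) (hdown : ∀ k, n ≤ k → a (k + 1) ≤ a k) :
    |∑' k, a k * v k| ≤ D * ∑' k, a k + |∑' k, (-1) ^ k * a k| := by
  have bsum : ∀ w : ℕ → ℝ, (∀ k, |w k| ≤ 1) → Summable fun k => w k * a k := by
    intro w hw
    refine Summable.of_norm_bounded hs (fun i => ?_)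
    rw [Real.norm_eq_abs, abs_mul, abs_of_nonneg (hp i)]
    exact mul_le_of_le_one_left (hp i) (hw i)
  have hD : 0 ≤ D := by have := (abs_nonneg _).trans (hv 0); linarith
  have hU := up_bound a v D (hp 0) hv n hup
  have hA := (altA_bounds a (hp 0) n hup).1
  have hAe := altA_eq a n
  obtain ⟨B, hBe, hB, hL⟩ := down_bound (fun k => a (k + (n + 1))) (fun k => v (k + (n + 1))) D
    ((summable_nat_add_iff (n + 1)).2 hs) (fun k => hv1 _)
    (fun k => by have := hv (k + (n + 1)); rwa [show k + 1 + (n + 1) = k + (n + 1) + 1 by ring])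
    (antitone_nat_of_succ_le (fun k => by
      have := hdown (k + (n + 1)) (by omega)
      rwa [show k + 1 + (n + 1) = k + (n + 1) + 1 by ring]))
  set A := altA a n
  have sv : Summable fun k => a k * v k := by simpa [mul_comm] using bsum v hv1
  have f1 := sv.sum_add_tsum_nat_add (n + 1)
  have f2 := hs.sum_add_tsum_nat_add (n + 1)
  have f3 := (bsum (fun k => (-1) ^ k) (by simp)).sum_add_tsum_nat_add (n + 1)
  have f4 : ∑' k, (-1 : ℝ) ^ (k + (n + 1)) * a (k + (n + 1)) = (-1) ^ (n + 1) * B := by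
    rw [hBe, ← tsum_mul_left]
    exact tsum_congr (fun k => by rw [pow_add]; ring)
  have hsq : (-1 : ℝ) ^ n * (-1) ^ n = 1 := by rw [← mul_pow]; simp
  have f5 : ∑' k, (-1 : ℝ) ^ k * a k = (-1) ^ n * (A - B) := by
    rw [← f3, f4, hAe, mul_sub, ← mul_assoc, hsq, pow_succ]; ring
  have f6 : |∑' k, (-1 : ℝ) ^ k * a k| = |A - B| := by rw [f5, abs_mul]; simp
  rw [f6, ← f1, ← f2]
  have hvn := hv n
  have hJ : |A * v n + B * v (n + 1)| ≤ |A - B| + D * (A + B - |A - B|) := by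
    rcases le_total A B with h | h
    · rw [abs_of_nonpos (sub_nonpos.2 h)]
      rw [show A * v n + B * v (n + 1) = A * (v n + v (n + 1)) + (B - A) * v (n + 1) by ring]
      refine (abs_add_le _ _).trans ?_
      rw [abs_mul, abs_mul, abs_of_nonneg hA, abs_of_nonneg (sub_nonneg.2 h)]
      have := mul_le_mul_of_nonneg_left hvn hA
      have := mul_le_mul_of_nonneg_left (hv1 (n + 1)) (sub_nonneg.2 h)
      linarith
    · rw [abs_of_nonneg (sub_nonneg.2 h)]
      rw [show A * v n + B * v (n + 1) = B * (v n + v (n + 1)) + (A - B) * v n by ring]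
      refine (abs_add_le _ _).trans ?_
      rw [abs_mul, abs_mul, abs_of_nonneg hB, abs_of_nonneg (sub_nonneg.2 h)]
      have := mul_le_mul_of_nonneg_left hvn hB
      have := mul_le_mul_of_nonneg_left (hv1 n) (sub_nonneg.2 h)
      linarith
  have hDA : 0 ≤ D * |A - B| := mul_nonneg hD (abs_nonneg _)
  simp only [zero_add] at hL
  rw [abs_le] at hU hL hJ ⊢
  constructor <;> linarith [hU.1, hU.2, hL.1, hL.2, hJ.1, hJ.2]

/-- Poisson weights. -/
noncomputable def poisW (l : ℝ) (k : ℕ) : ℝ := Real.exp (-l) * l ^ k / (Nat.factorial k)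

lemma poisW_hasSum (l : ℝ) : HasSum (poisW l) 1 := by
  have h := (NormedSpace.expSeries_div_hasSum_exp (𝔸 := ℝ) l).mul_left (Real.exp (-l))
  rw [← Real.exp_eq_exp_ℝ, ← Real.exp_add] at h
  have e : poisW l = fun i => Real.exp (-l) * (l ^ i / (Nat.factorial i)) := by
    funext i; rw [poisW, mul_div_assoc]
  rw [e]
  simpa using h

lemma poisW_alt (l : ℝ) : ∑' k, (-1) ^ k * poisW l k = Real.exp (-2 * l) := by
  have h := (NormedSpace.expSeries_div_hasSum_exp (𝔸 := ℝ) (-l)).mul_left (Real.exp (-l))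
  rw [← Real.exp_eq_exp_ℝ, ← Real.exp_add] at h
  rw [show -2 * l = -l + -l by ring, ← h.tsum_eq]
  refine tsum_congr (fun k => ?_)
  rw [poisW, neg_pow l]; ring

lemma poisW_succ (l : ℝ) (k : ℕ) : poisW l (k + 1) * (k + 1) = poisW l k * l := by
  simp only [poisW, Nat.factorial_succ]
  push_cast
  field_simp
  ring

lemma poisW_nonneg {l : ℝ} (hl : 0 ≤ l) (k : ℕ) : 0 ≤ poisW l k := by
  unfold poisW; positivity

lemma poisW_up {l : ℝ} (hl : 0 ≤ l) (k : ℕ) (h : (k : ℝ) + 1 ≤ l) :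
    poisW l k ≤ poisW l (k + 1) := by
  have h1 := poisW_succ l k
  have h2 := poisW_nonneg hl (k + 1)
  have h3 := poisW_nonneg hl k
  have hk : (0 : ℝ) < k + 1 := by positivity
  have := mul_le_mul_of_nonneg_left h h3
  exact le_of_mul_le_mul_right (by linarith) hk

lemma poisW_down {l : ℝ} (hl : 0 ≤ l) (k : ℕ) (h : l ≤ (k : ℝ) + 1) :
    poisW l (k + 1) ≤ poisW l k := by
  have h1 := poisW_succ l k
  have h3 := poisW_nonneg hl k
  have hk : (0 : ℝ) < k + 1 := by positivity
  have := mul_le_mul_of_nonneg_left h h3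
  exact le_of_mul_le_mul_right (by linarith) hk

lemma chernoff (t : ℕ) (ht : 1 ≤ t) (l : ℝ) (hl : (t : ℝ) ≤ l) :
    ∑ k ∈ Finset.range (t + 1), poisW l k + Real.exp (-2 * l)
      ≤ Real.exp (-l) * Real.exp t * (l / t) ^ t := by
  have ht1 : (1 : ℝ) ≤ t := by exact_mod_cast ht
  have ht0 : (0 : ℝ) < t := by linarith
  have hl0 : 0 < l := by linarith
  have hr : 1 ≤ l / t := (one_le_div ht0).2 hl
  have h1 : ∀ k ∈ Finset.range (t + 1), l ^ k / (Nat.factorial k) ≤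
      (t : ℝ) ^ k / (Nat.factorial k) * (l / t) ^ t := by
    intro k hk
    have hk : k ≤ t := by simpa [Nat.lt_succ_iff] using hk
    have : l ^ k ≤ (t : ℝ) ^ k * (l / t) ^ t := by
      calc l ^ k = (t : ℝ) ^ k * (l / t) ^ k := by rw [← mul_pow]; congr 1; field_simp
        _ ≤ _ := by gcongr
    rw [div_mul_eq_mul_div]
    gcongr
  have h2 : Real.exp (-l) ≤ (t : ℝ) ^ (t + 1) / (Nat.factorial (t + 1)) * (l / t) ^ t := by
    have hf : (Nat.factorial t : ℝ) ≤ (t : ℝ) ^ t := by exact_mod_cast Nat.factorial_le_pow t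
    have hf0 : (0 : ℝ) < Nat.factorial t := by positivity
    have a1 : (1 : ℝ) / 2 ≤ (t : ℝ) ^ (t + 1) / (Nat.factorial (t + 1)) := by
      rw [Nat.factorial_succ, pow_succ]
      push_cast
      rw [div_le_div_iff₀ (by norm_num) (by positivity)]
      nlinarith [mul_le_mul hf ht1 (by norm_num) (by positivity)]
    have a2 : Real.exp (-l) ≤ 1 / 2 := by
      rw [Real.exp_neg, one_div]
      apply inv_anti₀ (by norm_num)
      linarith [Real.add_one_le_exp l]
    have a3 : 1 ≤ (l / t) ^ t := one_le_pow₀ hr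
    nlinarith
  have h3 := Real.sum_le_exp_of_nonneg ht0.le (t + 2)
  rw [Finset.sum_range_succ] at h3
  have h4 := Finset.sum_le_sum h1
  rw [← Finset.sum_mul] at h4
  have h5 : ∑ k ∈ Finset.range (t + 1), poisW l k =
      Real.exp (-l) * ∑ k ∈ Finset.range (t + 1), l ^ k / (Nat.factorial k) := by
    rw [Finset.mul_sum]; exact Finset.sum_congr rfl (fun k _ => by rw [poisW, mul_div_assoc])
  rw [h5, show -2 * l = -l + -l by ring, Real.exp_add, ← mul_add, mul_assoc]
  apply mul_le_mul_of_nonneg_left _ (Real.exp_pos _).le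
  have h6 := mul_le_mul_of_nonneg_right h3 (show 0 ≤ (l / t) ^ t by positivity)
  linarith

lemma one_add_le_exp' (x : ℝ) (h0 : 0 ≤ x) (h1 : x ≤ 1) : 1 + x ≤ Real.exp (x - x ^ 2 / 4) := by
  have := Real.quadratic_le_exp_of_nonneg (x := x - x ^ 2 / 4) (by nlinarith)
  have h2 : (1 : ℝ) / 2 ≤ (1 - x / 4) ^ 2 := by nlinarith
  nlinarith [mul_le_mul_of_nonneg_left h2 (sq_nonneg x)]

lemma tail_bound (t : ℕ) (s : ℝ) (hs : 0 < s) (hst : s ≤ Real.sqrt t) :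
    Real.exp (-((t : ℝ) + s * Real.sqrt t)) * Real.exp t *
      (((t : ℝ) + s * Real.sqrt t) / t) ^ t ≤ Real.exp (-s ^ 2 / 4) := by
  set r := Real.sqrt t
  have hr : 0 < r := by linarith
  have hrt : (t : ℝ) = r ^ 2 := (Real.sq_sqrt (Nat.cast_nonneg t)).symm
  have e : ((t : ℝ) + s * r) / t = 1 + s / r := by rw [hrt]; field_simp
  rw [e]
  have h := one_add_le_exp' (s / r) (by positivity) ((div_le_one hr).2 hst)
  have h' := pow_le_pow_left₀ (by positivity) h t
  rw [← Real.exp_nat_mul] at h'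
  have := mul_le_mul_of_nonneg_left h'
    (show 0 ≤ Real.exp (-((t : ℝ) + s * r)) * Real.exp t by positivity)
  refine this.trans (le_of_eq ?_)
  rw [← Real.exp_add, ← Real.exp_add]
  congr 1
  rw [hrt]
  field_simp
  ring

/-- Scalar version of the main theorem. -/
lemma scalar_main (t : ℕ) (s : ℝ) (hs : 0 < s) (hst : s ≤ Real.sqrt t) (v : ℕ → ℝ) (D : ℝ)
    (hv1 : ∀ k, |v k| ≤ 1) (hv : ∀ k, |v (k + t) + v (k + t + 1)| ≤ 2 * D) :
    ∑' k, poisW ((t : ℝ) + s * Real.sqrt t) k * v k ≤ D + Real.exp (-s ^ 2 / 4) := by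
  have ht : 1 ≤ t := by
    rcases Nat.eq_zero_or_pos t with h | h
    · subst h; simp at hst; linarith
    · exact h
  set l := (t : ℝ) + s * Real.sqrt t with hl
  have htl : (t : ℝ) ≤ l := by
    have : 0 ≤ s * Real.sqrt t := by positivity
    linarith
  have hl0 : 0 ≤ l := (Nat.cast_nonneg t).trans htl
  have hfin := (chernoff t ht l htl).trans (tail_bound t s hs hst)
  have hD : 0 ≤ D := by have := (abs_nonneg _).trans (hv 0); linarith
  have hS := (poisW_hasSum l).summable
  have hp := poisW_nonneg hl0
  have bsum : ∀ w : ℕ → ℝ, (∀ k, |w k| ≤ 1) → Summable fun k => w k * poisW l k := by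
    intro w hw
    refine Summable.of_norm_bounded hS (fun i => ?_)
    rw [Real.norm_eq_abs, abs_mul, abs_of_nonneg (hp i)]
    exact mul_le_of_le_one_left (hp i) (hw i)
  have sv : Summable fun k => poisW l k * v k := by simpa [mul_comm] using bsum v hv1
  have hfl : t ≤ ⌊l⌋₊ := Nat.le_floor htl
  have hcore := unimodal_bound (fun k => poisW l (k + t)) (fun k => v (k + t)) D
    ((summable_nat_add_iff t).2 hS) (fun k => hp _) (fun k => hv1 _)
    (fun k => by have := hv k; rwa [show k + 1 + t = k + t + 1 by ring]) (⌊l⌋₊ - t)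
    (fun k hk => by
      rw [show k + 1 + t = k + t + 1 by ring]
      apply poisW_up hl0
      have : k + t + 1 ≤ ⌊l⌋₊ := by omega
      exact_mod_cast (Nat.le_floor_iff hl0).1 this)
    (fun k hk => by
      rw [show k + 1 + t = k + t + 1 by ring]
      apply poisW_down hl0
      have h1 : ⌊l⌋₊ ≤ k + t := by omega
      have h2 : (⌊l⌋₊ : ℝ) ≤ ((k + t : ℕ) : ℝ) := by exact_mod_cast h1
      linarith [Nat.lt_floor_add_one l])
  have f1 := sv.sum_add_tsum_nat_add t
  have f2 := hS.sum_add_tsum_nat_add t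
  have f3 := (bsum (fun k => (-1) ^ k) (by simp)).sum_add_tsum_nat_add t
  rw [poisW_alt] at f3
  rw [(poisW_hasSum l).tsum_eq] at f2
  have f4 : ∑' k, (-1 : ℝ) ^ (k + t) * poisW l (k + t) =
      (-1) ^ t * ∑' k, (-1 : ℝ) ^ k * poisW l (k + t) := by
    rw [← tsum_mul_left]
    exact tsum_congr (fun k => by rw [pow_add]; ring)
  have f5 : |∑' k, (-1 : ℝ) ^ k * poisW l (k + t)| =
      |∑' k, (-1 : ℝ) ^ (k + t) * poisW l (k + t)| := by
    rw [f4, abs_mul]; simp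
  have f6 : |∑ k ∈ Finset.range t, (-1 : ℝ) ^ k * poisW l k| ≤ poisW l t := by
    obtain ⟨n, rfl⟩ : ∃ n, t = n + 1 := ⟨t - 1, by omega⟩
    have hupk : ∀ k ≤ n, poisW l k ≤ poisW l (k + 1) := by
      intro k hk
      apply poisW_up hl0
      refine le_trans ?_ htl
      exact_mod_cast Nat.succ_le_succ hk
    have hb := altA_bounds (poisW l) (hp 0) n (fun k hk => hupk k hk.le)
    have he := altA_eq (poisW l) n
    have : |∑ k ∈ Finset.range (n + 1), (-1 : ℝ) ^ k * poisW l k| = |altA (poisW l) n| := by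
      rw [he, abs_mul]; simp
    rw [this, abs_of_nonneg hb.1]
    exact hb.2.trans (hupk n le_rfl)
  have f7 : ∑ k ∈ Finset.range t, poisW l k * v k ≤ ∑ k ∈ Finset.range t, poisW l k :=
    Finset.sum_le_sum (fun k _ => mul_le_of_le_one_right (hp k) ((le_abs_self _).trans (hv1 k)))
  have f8 : |∑' k, (-1 : ℝ) ^ (k + t) * poisW l (k + t)| ≤ Real.exp (-2 * l) + poisW l t := by
    rw [show ∑' k, (-1 : ℝ) ^ (k + t) * poisW l (k + t) = Real.exp (-2 * l) -
      ∑ k ∈ Finset.range t, (-1 : ℝ) ^ k * poisW l k by linarith]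
    refine (abs_sub _ _).trans ?_
    rw [abs_of_pos (Real.exp_pos _)]
    linarith
  rw [Finset.sum_range_succ] at hfin
  rw [f5] at hcore
  have f9 : ∑' k, poisW l (k + t) ≤ 1 := by
    have := Finset.sum_nonneg (fun k (_ : k ∈ Finset.range t) => hp k)
    linarith
  have := mul_le_mul_of_nonneg_left f9 hD
  have := (le_abs_self _).trans hcore
  linarith

lemma l1_contract {Ω : Type} [Fintype Ω] (P : Matrix Ω Ω ℝ) (hP : IsStochastic P)
    (w : Ω → ℝ) : ∑ y, |(w ᵥ* P) y| ≤ ∑ x, |w x| := by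
  calc ∑ y, |(w ᵥ* P) y| ≤ ∑ y, ∑ x, |w x| * P x y := by
        refine Finset.sum_le_sum (fun y _ => ?_)
        refine (Finset.abs_sum_le_sum_abs _ _).trans (le_of_eq ?_)
        exact Finset.sum_congr rfl (fun x _ => by rw [abs_mul, abs_of_nonneg (hP.1 x y)])
    _ = ∑ x, |w x| := by
        rw [Finset.sum_comm]
        exact Finset.sum_congr rfl (fun x _ => by rw [← Finset.mul_sum, hP.2 x, mul_one])

/-- **Proposition 1.8 (eq. (10), first line) of Hermon–Peres.**
For every finite irreducible Markov chain (no reversibility needed), every `t ∈ ℕ`,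
every `0 < s ≤ √t` and every initial distribution `μ`,
`d_c(t + s√t, μ) ≤ d_ave(t, μ) + e^{-s²/4}`. -/
theorem cont_dist_le_ave_dist :
    ∀ (Ω : Type) [Fintype Ω] [DecidableEq Ω]
      (P : Matrix Ω Ω ℝ) (pi : Ω → ℝ), IsMC P pi →
      ∀ (t : ℕ) (s : ℝ), 0 < s → s ≤ Real.sqrt t →
      ∀ μ : Ω → ℝ, IsProbVec μ →
        contDist P pi ((t : ℝ) + s * Real.sqrt t) μ ≤
          aveDist P pi (t : ℝ) μ + Real.exp (-s ^ 2 / 4) := by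
  intro Ω _ _ P pi hMC t s hs hst μ hμ
  obtain ⟨hP, -, hpi, hstat⟩ := hMC
  have hrec : ∀ k, μ ᵥ* (P ^ (k + 1)) = (μ ᵥ* (P ^ k)) ᵥ* P := by
    intro k; rw [pow_succ, Matrix.vecMul_vecMul]
  have hpr : ∀ k, IsProbVec (μ ᵥ* (P ^ k)) := by
    intro k
    induction k with
    | zero => simpa using hμ
    | succ k ih =>
      rw [hrec]
      refine ⟨fun y => Finset.sum_nonneg (fun x _ => mul_nonneg (ih.1 x) (hP.1 x y)), ?_⟩
      rw [← ih.2]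
      simp only [Matrix.vecMul, dotProduct]
      rw [Finset.sum_comm]
      exact Finset.sum_congr rfl (fun x _ => by rw [← Finset.mul_sum, hP.2 x, mul_one])
  -- monotonicity of the averaged distance
  set w : ℕ → Ω → ℝ := fun k => μ ᵥ* (P ^ k) + μ ᵥ* (P ^ (k + 1)) - (2 : ℝ) • pi with hw
  have hwrec : ∀ k, w (k + 1) = w k ᵥ* P := by
    intro k
    simp only [hw, Matrix.sub_vecMul, Matrix.add_vecMul, Matrix.smul_vecMul, hstat, ← hrec]
  have hwmono : ∀ k, ∑ x, |w (k + t) x| ≤ ∑ x, |w t x| := by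
    intro k
    induction k with
    | zero => simp
    | succ k ih =>
      rw [show k + 1 + t = k + t + 1 by ring, hwrec]
      exact (l1_contract P hP _).trans ih
  have hD : aveDist P pi (t : ℝ) μ = (∑ x, |w t x|) / 4 := by
    simp only [aveDist, tvDist, Nat.floor_natCast]
    have : ∀ x, |((μ ᵥ* (P ^ t)) x + (μ ᵥ* (P ^ (t + 1))) x) / 2 - pi x| = |w t x| / 2 := by
      intro x
      rw [show ((μ ᵥ* (P ^ t)) x + (μ ᵥ* (P ^ (t + 1))) x) / 2 - pi x = w t x / 2 by
        simp [hw]; ring, abs_div, abs_two]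
    simp only [this]
    rw [← Finset.sum_div]; ring
  set l := (t : ℝ) + s * Real.sqrt t with hl
  have hl0 : 0 ≤ l := by positivity
  set q : Ω → ℝ := fun y => ∑' k : ℕ, poisW l k * (μ ᵥ* (P ^ k)) y with hq
  have hle1 : ∀ k y, (μ ᵥ* (P ^ k)) y ≤ 1 := by
    intro k y
    rw [← (hpr k).2]
    exact Finset.single_le_sum (fun x _ => (hpr k).1 x) (Finset.mem_univ y)
  have hsumm : ∀ y, Summable fun k => poisW l k * (μ ᵥ* (P ^ k)) y := by
    intro y
    refine Summable.of_nonneg_of_le (fun k => mul_nonneg (poisW_nonneg hl0 k) ((hpr k).1 y))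
      (fun k => mul_le_of_le_one_right (poisW_nonneg hl0 k) (hle1 k y)) (poisW_hasSum l).summable
  have hc : contDist P pi l μ = (∑ x, |q x - pi x|) / 2 := rfl
  -- the sign vector
  set σ : Ω → ℝ := fun x => if 0 ≤ q x - pi x then 1 else -1 with hσ
  have hσ1 : ∀ x, |σ x| = 1 := by
    intro x; simp only [hσ]; split_ifs <;> simp
  have hσq : ∀ x, |q x - pi x| = σ x * (q x - pi x) := by
    intro x; simp only [hσ]; split_ifs with h
    · rw [abs_of_nonneg h, one_mul]
    · rw [abs_of_neg (not_le.1 h)]; ring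
  have hdual : ∀ f : Ω → ℝ, |∑ x, σ x * f x| ≤ ∑ x, |f x| := by
    intro f
    refine (Finset.abs_sum_le_sum_abs _ _).trans (le_of_eq ?_)
    exact Finset.sum_congr rfl (fun x _ => by rw [abs_mul, hσ1, one_mul])
  set v : ℕ → ℝ := fun k => (∑ x, σ x * ((μ ᵥ* (P ^ k)) x - pi x)) / 2 with hv
  have hv1 : ∀ k, |v k| ≤ 1 := by
    intro k
    simp only [hv]
    rw [abs_div, abs_two, div_le_one (by norm_num)]
    refine (hdual _).trans ?_
    calc ∑ x, |(μ ᵥ* (P ^ k)) x - pi x| ≤ ∑ x, ((μ ᵥ* (P ^ k)) x + pi x) := by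
          refine Finset.sum_le_sum (fun x _ => ?_)
          have h1 := (hpr k).1 x
          have h2 := hpi.1 x
          rw [abs_le]; constructor <;> linarith
      _ = 2 := by rw [Finset.sum_add_distrib, (hpr k).2, hpi.2]; norm_num
  have hv2 : ∀ k, |v (k + t) + v (k + t + 1)| ≤ 2 * aveDist P pi (t : ℝ) μ := by
    intro k
    have e : v (k + t) + v (k + t + 1) = (∑ x, σ x * w (k + t) x) / 2 := by
      simp only [hv]
      rw [← add_div, ← Finset.sum_add_distrib]
      congr 1
      refine Finset.sum_congr rfl (fun x _ => ?_)
      simp [hw]; ring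
    rw [e, abs_div, abs_two, hD]
    have := (hdual (w (k + t))).trans (hwmono k)
    linarith
  have hmain := scalar_main t s hs hst v _ hv1 hv2
  refine le_trans (le_of_eq ?_) hmain
  rw [hc]
  have hpisum : HasSum (fun k => ∑ x, σ x * (poisW l k * (μ ᵥ* (P ^ k)) x - poisW l k * pi x))
      (∑ x, σ x * (q x - pi x)) := by
    refine hasSum_sum (fun x _ => ?_)
    refine HasSum.mul_left _ ((hsumm x).hasSum.sub ?_)
    simpa using (poisW_hasSum l).mul_right (pi x)
  simp only [hσq]
  rw [← (hpisum.div_const 2).tsum_eq]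
  refine tsum_congr (fun k => ?_)
  simp only [hv]
  rw [mul_div_assoc', Finset.mul_sum]
  congr 1
  exact Finset.sum_congr rfl (fun x _ => by ring)
end

section
/- Let (Ω,P,π) be a finite irreducible Markov chain (reversibility is not assumed). Then for every natural number t, every real 0 < s ≤ √t and every probability measure μ on Ω: d_L(2t + ⌈2s√t⌉, μ) ≤ d_ave(t, μ) + e^{−s²/4}. -/
open Matrix Filter Asymptotics

theorem tv_contract {Ω : Type*} [Fintype Ω] (Q : Matrix Ω Ω ℝ) (hQ : IsStochastic Q)
    (a b : Ω → ℝ) : tvDist (a ᵥ* Q) (b ᵥ* Q) ≤ tvDist a b := by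
  unfold tvDist
  have h : ∑ y, |(a ᵥ* Q) y - (b ᵥ* Q) y| ≤ ∑ x, |a x - b x| := by
    calc ∑ y, |(a ᵥ* Q) y - (b ᵥ* Q) y| ≤ ∑ y, ∑ x, |a x - b x| * Q x y := by
          apply Finset.sum_le_sum
          intro y _
          simp only [Matrix.vecMul, dotProduct]
          rw [← Finset.sum_sub_distrib]
          refine (Finset.abs_sum_le_sum_abs _ _).trans (Finset.sum_le_sum fun x _ => ?_)
          rw [← sub_mul, abs_mul, abs_of_nonneg (hQ.1 x y)]
      _ = ∑ x, |a x - b x| := by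
          rw [Finset.sum_comm]
          refine Finset.sum_congr rfl fun x _ => ?_
          rw [← Finset.mul_sum, hQ.2 x, mul_one]
  linarith

theorem tv_le_one {Ω : Type*} [Fintype Ω] (a b : Ω → ℝ) (ha : IsProbVec a) (hb : IsProbVec b) :
    tvDist a b ≤ 1 := by
  unfold tvDist
  have h : ∑ x, |a x - b x| ≤ ∑ x, (a x + b x) := by
    refine Finset.sum_le_sum fun x _ => ?_
    have := ha.1 x
    have := hb.1 x
    rw [abs_le]
    constructor <;> linarith
  rw [Finset.sum_add_distrib, ha.2, hb.2] at h
  linarith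

theorem tv_avg {Ω : Type*} [Fintype Ω] (a b p : Ω → ℝ) :
    tvDist ((2 : ℝ)⁻¹ • (a + b)) p ≤ (tvDist a p + tvDist b p) / 2 := by
  unfold tvDist
  have h : ∑ x, |((2 : ℝ)⁻¹ • (a + b)) x - p x| ≤ ∑ x, (|a x - p x| / 2 + |b x - p x| / 2) := by
    refine Finset.sum_le_sum fun x _ => ?_
    have e : ((2 : ℝ)⁻¹ • (a + b)) x - p x = (a x - p x) / 2 + (b x - p x) / 2 := by
      simp only [Pi.smul_apply, Pi.add_apply, smul_eq_mul]
      ring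
    rw [e]
    refine (abs_add_le _ _).trans (le_of_eq ?_)
    rw [abs_div, abs_div, abs_two]
  rw [Finset.sum_add_distrib, ← Finset.sum_div, ← Finset.sum_div] at h
  linarith

section
variable {Ω : Type*} [Fintype Ω] [DecidableEq Ω]

theorem lazy_stoch (P : Matrix Ω Ω ℝ) (hP : IsStochastic P) : IsStochastic (lazyM P) := by
  constructor
  · intro x y
    have := hP.1 x y
    have h1 : (0 : ℝ) ≤ (1 : Matrix Ω Ω ℝ) x y := by
      rw [Matrix.one_apply]
      split_ifs <;> norm_num
    simp only [lazyM, Matrix.smul_apply, Matrix.add_apply, smul_eq_mul]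
    positivity
  · intro x
    simp only [lazyM, Matrix.smul_apply, Matrix.add_apply, smul_eq_mul]
    rw [← Finset.mul_sum, Finset.sum_add_distrib, hP.2 x]
    simp [Matrix.one_apply]
    norm_num

theorem lazy_comm (P : Matrix Ω Ω ℝ) : Commute P (lazyM P) := by
  unfold lazyM
  exact ((Commute.one_right P).add_right (Commute.refl P)).smul_right _

theorem lazy_stat (P : Matrix Ω Ω ℝ) (p : Ω → ℝ) (h : p ᵥ* P = p) : p ᵥ* lazyM P = p := by
  unfold lazyM
  rw [Matrix.vecMul_smul, Matrix.vecMul_add, Matrix.vecMul_one, h]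
  ext x
  simp only [Pi.smul_apply, Pi.add_apply, smul_eq_mul]
  ring

theorem ave_eq (P : Matrix Ω Ω ℝ) (μ : Ω → ℝ) (k : ℕ) :
    (fun y => ((μ ᵥ* (P ^ k)) y + (μ ᵥ* (P ^ (k + 1))) y) / 2) = μ ᵥ* (P ^ k * lazyM P) := by
  ext y
  unfold lazyM
  rw [Matrix.mul_smul, Matrix.vecMul_smul, mul_add, mul_one, ← pow_succ, Matrix.vecMul_add]
  simp only [Pi.smul_apply, Pi.add_apply, smul_eq_mul]
  ring

theorem step_anti (P : Matrix Ω Ω ℝ) (pi μ : Ω → ℝ) (h : IsMC P pi) :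
    Antitone (fun k : ℕ => tvDist (μ ᵥ* (P ^ k * lazyM P)) pi) := by
  refine antitone_nat_of_succ_le fun k => ?_
  have e : P ^ (k + 1) * lazyM P = P ^ k * lazyM P * P := by
    rw [pow_succ, mul_assoc, (lazy_comm P).eq, ← mul_assoc]
  have := tv_contract P h.1 (μ ᵥ* (P ^ k * lazyM P)) pi
  rw [h.2.2.2, Matrix.vecMul_vecMul] at this
  simpa only [e] using this

theorem main_ind (P : Matrix Ω Ω ℝ) (pi μ : Ω → ℝ) (h : IsMC P pi) (hμ : IsProbVec μ)
    (t : ℕ) (l : ℝ) (hl : 0 ≤ l) (N : ℕ) : ∀ k : ℕ,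
    tvDist (μ ᵥ* (P ^ k * lazyM P * lazyM P ^ N)) pi ≤
      tvDist (μ ᵥ* (P ^ t * lazyM P)) pi
        + Real.exp (l * ((t : ℝ) - 1 - k)) * ((1 + Real.exp (-l)) / 2) ^ N := by
  induction N with
  | zero =>
    intro k
    rw [pow_zero, pow_zero, mul_one, mul_one]
    rcases le_or_gt t k with hk | hk
    · have h1 : tvDist (μ ᵥ* (P ^ k * lazyM P)) pi ≤ tvDist (μ ᵥ* (P ^ t * lazyM P)) pi :=
        step_anti P pi μ h hk
      have := Real.exp_pos (l * ((t : ℝ) - 1 - k))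
      linarith
    · have h1 : tvDist (μ ᵥ* (P ^ k * lazyM P)) pi ≤ tvDist (μ ᵥ* (P ^ 0 * lazyM P)) pi :=
        step_anti P pi μ h (Nat.zero_le k)
      have h2 := tv_contract (lazyM P) (lazy_stoch P h.1) μ pi
      rw [lazy_stat P pi h.2.2.2] at h2
      rw [pow_zero, one_mul] at h1
      have h3 := tv_le_one μ pi hμ h.2.2.1
      have h4 : 0 ≤ tvDist (μ ᵥ* (P ^ t * lazyM P)) pi := by
        unfold tvDist
        positivity
      have h5 : (k : ℝ) + 1 ≤ t := by exact_mod_cast hk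
      have h6 : 1 ≤ Real.exp (l * ((t : ℝ) - 1 - k)) :=
        Real.one_le_exp (mul_nonneg hl (by linarith))
      linarith
  | succ N ih =>
    intro k
    have e : P ^ k * lazyM P * lazyM P ^ (N + 1) =
        (2 : ℝ)⁻¹ • (P ^ k * lazyM P * lazyM P ^ N + P ^ (k + 1) * lazyM P * lazyM P ^ N) := by
      have c : lazyM P ^ N * lazyM P = lazyM P * lazyM P ^ N := (Commute.refl _).pow_left N |>.eq
      have c2 : lazyM P * (lazyM P * lazyM P ^ N)
          = (2 : ℝ)⁻¹ • (lazyM P * lazyM P ^ N + P * (lazyM P * lazyM P ^ N)) := by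
        nth_rewrite 1 [lazyM]
        rw [Matrix.smul_mul, add_mul, one_mul]
      rw [pow_succ, c, mul_assoc, c2, Matrix.mul_smul, mul_add, pow_succ]
      simp only [mul_assoc]
    rw [e, Matrix.vecMul_smul, Matrix.vecMul_add]
    refine (tv_avg _ _ _).trans ?_
    have h1 := ih k
    have h2 := ih (k + 1)
    have e2 : Real.exp (l * ((t : ℝ) - 1 - (k + 1 : ℕ)))
        = Real.exp (l * ((t : ℝ) - 1 - k)) * Real.exp (-l) := by
      rw [← Real.exp_add]
      congr 1
      push_cast
      ring
    rw [e2] at h2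
    rw [pow_succ ((1 + Real.exp (-l)) / 2) N]
    generalize ((1 + Real.exp (-l)) / 2) ^ N = z at *
    generalize tvDist (μ ᵥ* (P ^ (k + 1) * lazyM P * lazyM P ^ N)) pi = z2 at *
    generalize tvDist (μ ᵥ* (P ^ k * lazyM P * lazyM P ^ N)) pi = z3 at *
    linarith
end

theorem half_exp (l : ℝ) : (1 + Real.exp (-l)) / 2 ≤ Real.exp (-l / 2 + l ^ 2 / 8) := by
  have h := Real.cosh_le_exp_half_sq (l / 2)
  rw [Real.cosh_eq] at h
  have e : (1 + Real.exp (-l)) / 2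
      = Real.exp (-l / 2) * ((Real.exp (l / 2) + Real.exp (-(l / 2))) / 2) := by
    rw [mul_div_assoc', mul_add, ← Real.exp_add, ← Real.exp_add]
    ring_nf
    simp
    ring
  rw [e, Real.exp_add]
  refine mul_le_mul_of_nonneg_left (h.trans (le_of_eq ?_)) (Real.exp_pos _).le
  congr 1
  ring

/-- **Proposition 1.8 (eq. (10), second line) of Hermon–Peres.**
For every finite irreducible Markov chain (no reversibility needed), every `t ∈ ℕ`,
every `0 < s ≤ √t` and every initial distribution `μ`,
`d_L(2t + ⌈2s√t⌉, μ) ≤ d_ave(t, μ) + e^{-s²/4}`. -/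
theorem lazy_dist_le_ave_dist :
    ∀ (Ω : Type) [Fintype Ω] [DecidableEq Ω]
      (P : Matrix Ω Ω ℝ) (pi : Ω → ℝ), IsMC P pi →
      ∀ (t : ℕ) (s : ℝ), 0 < s → s ≤ Real.sqrt t →
      ∀ μ : Ω → ℝ, IsProbVec μ →
        lazyDist P pi (2 * (t : ℝ) + ((⌈2 * s * Real.sqrt t⌉ : ℤ) : ℝ)) μ ≤
          aveDist P pi (t : ℝ) μ + Real.exp (-s ^ 2 / 4) := by
  intro Ω _ _ P pi h t s hs hst μ hμ
  have ht : 0 < (t : ℝ) := Real.sqrt_pos.mp (hs.trans_le hst)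
  have hq : Real.sqrt t * Real.sqrt t = t := Real.mul_self_sqrt ht.le
  have hpos : 0 < 2 * s * Real.sqrt t := by
    have := Real.sqrt_pos.mpr ht
    positivity
  obtain ⟨m, hm⟩ : ∃ m : ℕ, ⌈2 * s * Real.sqrt t⌉ = ((m + 1 : ℕ) : ℤ) := by
    have := Int.ceil_pos.mpr hpos
    exact ⟨(⌈2 * s * Real.sqrt t⌉ - 1).toNat, by omega⟩
  have hle : 2 * s * Real.sqrt t ≤ (m : ℝ) + 1 := by
    have := Int.le_ceil (2 * s * Real.sqrt t)
    rw [hm] at this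
    exact_mod_cast this
  have hup : (m : ℝ) + 1 ≤ 2 * t := by
    have h1 : ⌈2 * s * Real.sqrt t⌉ ≤ ((2 * t : ℕ) : ℤ) := by
      rw [Int.ceil_le]
      push_cast
      nlinarith [Real.sqrt_nonneg (t : ℝ)]
    rw [hm] at h1
    exact_mod_cast h1
  have e1 : ⌊2 * (t : ℝ) + ((⌈2 * s * Real.sqrt t⌉ : ℤ) : ℝ)⌋₊ = 2 * t + m + 1 := by
    rw [hm]
    have : 2 * (t : ℝ) + (((m + 1 : ℕ) : ℤ) : ℝ) = ((2 * t + m + 1 : ℕ) : ℝ) := by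
      push_cast
      ring
    rw [this, Nat.floor_natCast]
  unfold lazyDist aveDist
  rw [e1, Nat.floor_natCast, ave_eq]
  set l : ℝ := ((m : ℝ) + 1) / (2 * t) with hl
  have hl0 : 0 ≤ l := by positivity
  have key := main_ind P pi μ h hμ t l hl0 (2 * t + m) 0
  rw [pow_zero, one_mul, ← pow_succ'] at key
  refine key.trans (add_le_add le_rfl ?_)
  have h1 : ((1 + Real.exp (-l)) / 2) ^ (2 * t + m) ≤
      Real.exp (-l / 2 + l ^ 2 / 8) ^ (2 * t + m) :=
    pow_le_pow_left₀ (by positivity) (half_exp l) _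
  refine (mul_le_mul_of_nonneg_left h1 (Real.exp_pos _).le).trans ?_
  rw [← Real.exp_nat_mul, ← Real.exp_add, Real.exp_le_exp]
  push_cast
  have hlt : l * (2 * t) = (m : ℝ) + 1 := by
    rw [hl]
    field_simp
  have hls : s ^ 2 ≤ l ^ 2 * t := by
    have a1 : (2 * s * Real.sqrt t) ^ 2 ≤ (l * (2 * t)) ^ 2 := by
      rw [hlt]
      exact pow_le_pow_left₀ hpos.le hle 2
    have a2 : s ^ 2 * (4 * t) ≤ (l ^ 2 * t) * (4 * t) := by
      calc s ^ 2 * (4 * t) = (2 * s * Real.sqrt t) ^ 2 := by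
            rw [mul_pow, Real.sq_sqrt ht.le]
            ring
        _ ≤ _ := a1
        _ = _ := by ring
    exact le_of_mul_le_mul_right a2 (by positivity)
  have hmm : (m : ℝ) = l * (2 * t) - 1 := by linarith
  have hN : l ^ 2 / 8 * (2 * t + m) ≤ l ^ 2 / 8 * (4 * t) :=
    mul_le_mul_of_nonneg_left (by linarith) (by positivity)
  have hid : l * ((t : ℝ) - 1 - 0) + (2 * t + m) * (-l / 2 + l ^ 2 / 8)
      = -l / 2 - l ^ 2 * t + l ^ 2 / 8 * (2 * t + m) := by
    rw [hmm]
    ring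
  have hs2 := sq_nonneg s
  linarith
end

section
/- Let (Ω,P,π) be a finite irreducible Markov chain (reversibility is not assumed). Then for every natural number t, every real 0 < s ≤ √t and every probability measure μ on Ω: d_c(t + s√t, μ) ≤ d_L(2t, μ) + e^{−s²/2}. -/
open Matrix Filter Asymptotics

lemma aux_lazy_stoch {Ω : Type} [Fintype Ω] [DecidableEq Ω] {P : Matrix Ω Ω ℝ}
    (h : IsStochastic P) : IsStochastic (lazyM P) := by
  refine ⟨fun x y => ?_, fun x => ?_⟩
  · have h1 := h.1 x y
    have h2 : (0 : ℝ) ≤ (1 : Matrix Ω Ω ℝ) x y := by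
      rw [Matrix.one_apply]; split_ifs <;> norm_num
    simp only [lazyM, Matrix.smul_apply, Matrix.add_apply, smul_eq_mul]
    positivity
  · simp only [lazyM, Matrix.smul_apply, Matrix.add_apply, smul_eq_mul]
    rw [← Finset.mul_sum, Finset.sum_add_distrib, h.2 x]
    simp [Matrix.one_apply]
    norm_num

lemma aux_tv_step {Ω : Type} [Fintype Ω] [DecidableEq Ω] {Q : Matrix Ω Ω ℝ}
    (h : IsStochastic Q) (a b : Ω → ℝ) : tvDist (a ᵥ* Q) (b ᵥ* Q) ≤ tvDist a b := by
  unfold tvDist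
  have : ∑ y, |(a ᵥ* Q) y - (b ᵥ* Q) y| ≤ ∑ x, |a x - b x| := by
    calc ∑ y, |(a ᵥ* Q) y - (b ᵥ* Q) y| ≤ ∑ y, ∑ x, |a x - b x| * Q x y := by
          refine Finset.sum_le_sum fun y _ => ?_
          simp only [Matrix.vecMul, dotProduct]
          rw [← Finset.sum_sub_distrib]
          refine (Finset.abs_sum_le_sum_abs _ _).trans (Finset.sum_le_sum fun x _ => ?_)
          rw [← sub_mul, abs_mul, abs_of_nonneg (h.1 x y)]
      _ = ∑ x, |a x - b x| := by
          rw [Finset.sum_comm]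
          refine Finset.sum_congr rfl fun x _ => ?_
          rw [← Finset.mul_sum, h.2 x, mul_one]
  linarith

lemma aux_tv_le_one {Ω : Type} [Fintype Ω] {a b : Ω → ℝ}
    (ha : IsProbVec a) (hb : IsProbVec b) : tvDist a b ≤ 1 := by
  unfold tvDist
  have : ∑ x, |a x - b x| ≤ ∑ x, (a x + b x) := by
    refine Finset.sum_le_sum fun x _ => ?_
    have := ha.1 x
    have := hb.1 x
    rw [abs_le]; constructor <;> linarith
  rw [Finset.sum_add_distrib, ha.2, hb.2] at this
  linarith

lemma aux_pi {Ω : Type} [Fintype Ω] [DecidableEq Ω] {P : Matrix Ω Ω ℝ} {pi : Ω → ℝ}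
    (h : pi ᵥ* P = pi) : pi ᵥ* lazyM P = pi := by
  unfold lazyM
  rw [Matrix.vecMul_smul, Matrix.vecMul_add, h, Matrix.vecMul_one]
  ext x
  simp
  ring

lemma aux_anti {Ω : Type} [Fintype Ω] [DecidableEq Ω] {Q : Matrix Ω Ω ℝ}
    (h : IsStochastic Q) {pi : Ω → ℝ} (hpi : pi ᵥ* Q = pi) (μ : Ω → ℝ) :
    Antitone fun k : ℕ => tvDist (μ ᵥ* Q ^ k) pi := by
  refine antitone_nat_of_succ_le fun k => ?_
  have := aux_tv_step h (μ ᵥ* Q ^ k) pi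
  rwa [hpi, Matrix.vecMul_vecMul, ← pow_succ] at this

section
open NormedSpace
attribute [local instance] Matrix.linftyOpNormedRing Matrix.linftyOpNormedAlgebra

lemma aux_hasSum {Ω : Type} [Fintype Ω] [DecidableEq Ω] (Q : Matrix Ω Ω ℝ) (μ : Ω → ℝ)
    (r : ℝ) (y : Ω) :
    HasSum (fun k : ℕ => Real.exp (-r) * r ^ k / (Nat.factorial k) * (μ ᵥ* (Q ^ k)) y)
      (Real.exp (-r) * (μ ᵥ* exp (r • Q)) y) := by
  have h := NormedSpace.exp_series_hasSum_exp' (𝕂 := ℝ) (r • Q)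
  let L : Matrix Ω Ω ℝ →ₗ[ℝ] ℝ :=
    { toFun := fun M => (μ ᵥ* M) y
      map_add' := fun A B => by simp [Matrix.vecMul_add]
      map_smul' := fun c A => by simp [Matrix.vecMul_smul] }
  have hc : Continuous L := LinearMap.continuous_of_finiteDimensional L
  have h2 := (h.map L hc).mul_left (Real.exp (-r))
  have e : (fun k : ℕ => Real.exp (-r) * r ^ k / (Nat.factorial k) * (μ ᵥ* (Q ^ k)) y)
      = fun k : ℕ => Real.exp (-r) * (L ∘ fun n : ℕ => ((Nat.factorial n : ℝ)⁻¹) • (r • Q) ^ n) k := by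
    funext k
    simp only [Function.comp_apply, map_smul, smul_pow, smul_eq_mul]
    change _ = Real.exp (-r) * ((Nat.factorial k : ℝ)⁻¹ * (r ^ k * (μ ᵥ* (Q ^ k)) y))
    ring
  rw [e]
  exact h2

lemma aux_exp {Ω : Type} [Fintype Ω] [DecidableEq Ω] (P : Matrix Ω Ω ℝ) (μ : Ω → ℝ)
    (r : ℝ) (y : Ω) :
    Real.exp (-(2 * r)) * (μ ᵥ* exp ((2 * r) • lazyM P)) y
      = Real.exp (-r) * (μ ᵥ* exp (r • P)) y := by
  have h1 : (2 * r) • lazyM P = algebraMap ℝ (Matrix Ω Ω ℝ) r + r • P := by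
    rw [Algebra.algebraMap_eq_smul_one]
    unfold lazyM
    rw [smul_smul, show 2 * r * 2⁻¹ = r by ring, smul_add]
  have h2 : exp (algebraMap ℝ (Matrix Ω Ω ℝ) r) = Real.exp r • (1 : Matrix Ω Ω ℝ) := by
    have h3 := NormedSpace.algebraMap_exp_comm (𝕂 := ℝ) (𝔸 := Matrix Ω Ω ℝ) r
    refine Eq.trans h3.symm ?_
    rw [Real.exp_eq_exp_ℝ]
    exact Algebra.algebraMap_eq_smul_one _
  rw [h1, Matrix.exp_add_of_commute _ _ (Algebra.commutes r (r • P)), h2, smul_mul_assoc, one_mul,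
    Matrix.vecMul_smul, Pi.smul_apply, smul_eq_mul, ← mul_assoc, ← Real.exp_add]
  congr 2
  ring

end

lemma aux_poisson {l : ℝ} :
    HasSum (fun k : ℕ => Real.exp (-l) * l ^ k / (Nat.factorial k)) 1 := by
  have h := (NormedSpace.expSeries_div_hasSum_exp (𝔸 := ℝ) l).mul_left (Real.exp (-l))
  rw [← Real.exp_eq_exp_ℝ, ← Real.exp_add, neg_add_cancel, Real.exp_zero] at h
  simpa [mul_div_assoc] using h

lemma aux_exp_ineq {u : ℝ} (h0 : 0 ≤ u) (h1 : u ≤ 1) : 1 + u ≤ Real.exp (u - u ^ 2 / 4) := by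
  have hx : 0 ≤ u - u ^ 2 / 4 := by nlinarith
  have h := Real.quadratic_le_exp_of_nonneg hx
  have : 1 + u ≤ 1 + (u - u ^ 2 / 4) + (u - u ^ 2 / 4) ^ 2 / 2 := by
    have : (u - u ^ 2 / 4) ^ 2 = u ^ 2 * (1 - u / 4) ^ 2 := by ring
    have h3 : 1 / 2 ≤ (1 - u / 4) ^ 2 := by nlinarith
    nlinarith [mul_le_mul_of_nonneg_left h3 (sq_nonneg u)]
  linarith

lemma aux_tail (n : ℕ) {u : ℝ} (h0 : 0 ≤ u) (h1 : u ≤ 1) :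
    ∑ k ∈ Finset.range n, Real.exp (-(n * (1 + u))) * (n * (1 + u)) ^ k / (Nat.factorial k)
      ≤ Real.exp (-(n * u ^ 2 / 4)) := by
  have hb : ∑ k ∈ Finset.range n, (n : ℝ) ^ k / (Nat.factorial k) ≤ Real.exp n :=
    Real.sum_le_exp_of_nonneg (Nat.cast_nonneg n) n
  calc _ ≤ ∑ k ∈ Finset.range n, Real.exp (-(n * (1 + u))) * (1 + u) ^ n *
          ((n : ℝ) ^ k / (Nat.factorial k)) := by
        refine Finset.sum_le_sum fun k hk => ?_
        have hk' : k ≤ n := (Finset.mem_range.1 hk).le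
        have hp : (1 + u) ^ k ≤ (1 + u) ^ n := pow_le_pow_right₀ (by linarith) hk'
        rw [mul_pow]
        calc _ = Real.exp (-(n * (1 + u))) * (1 + u) ^ k * ((n : ℝ) ^ k / (Nat.factorial k)) := by
              ring
          _ ≤ _ := by gcongr
    _ ≤ Real.exp (-(n * (1 + u))) * (Real.exp (u - u ^ 2 / 4)) ^ n * Real.exp n := by
        rw [← Finset.mul_sum]
        have := aux_exp_ineq h0 h1
        gcongr
    _ = _ := by
        rw [← Real.exp_nat_mul, ← Real.exp_add, ← Real.exp_add]
        congr 1
        ring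

lemma aux_main {Ω : Type} [Fintype Ω] [DecidableEq Ω] {P : Matrix Ω Ω ℝ} {pi : Ω → ℝ}
    (hP : IsMC P pi) {μ : Ω → ℝ} (hμ : IsProbVec μ) (n : ℕ) {r : ℝ} (hr : 0 ≤ r) :
    contDist P pi r μ ≤ tvDist (μ ᵥ* lazyM P ^ n) pi +
      ∑ k ∈ Finset.range n, Real.exp (-(2 * r)) * (2 * r) ^ k / (Nat.factorial k) := by
  obtain ⟨hs, -, hpi, hst⟩ := hP
  have hQ := aux_lazy_stoch hs
  have hanti := aux_anti hQ (aux_pi hst) μ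
  set Q := lazyM P with hQdef
  set p : ℕ → ℝ := fun k => Real.exp (-(2 * r)) * (2 * r) ^ k / (Nat.factorial k) with hp
  have hp0 : ∀ k, 0 ≤ p k := fun k => by simp only [hp]; positivity
  have hp1 : HasSum p 1 := aux_poisson
  have hN0 : ∀ k, tvDist (μ ᵥ* Q ^ k) pi ≤ 1 := fun k => by
    refine (hanti (Nat.zero_le k)).trans ?_
    simpa using aux_tv_le_one hμ hpi
  have hsum : ∀ y, HasSum (fun k => p k * ((μ ᵥ* Q ^ k) y - pi y))
      ((∑' k : ℕ, Real.exp (-r) * r ^ k / (Nat.factorial k) * (μ ᵥ* (P ^ k)) y) - pi y) := by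
    intro y
    rw [(aux_hasSum P μ r y).tsum_eq, ← aux_exp]
    have := (aux_hasSum Q μ (2 * r) y).sub (hp1.mul_right (pi y))
    rw [one_mul] at this
    simpa only [mul_sub] using this
  have hD : ∀ k y, |(μ ᵥ* Q ^ k) y - pi y| ≤ 2 := by
    intro k y
    have h1 := hN0 k
    unfold tvDist at h1
    have h2 := Finset.single_le_sum (f := fun y => |(μ ᵥ* Q ^ k) y - pi y|)
      (fun x _ => abs_nonneg _) (Finset.mem_univ y)
    linarith
  have hsa : ∀ y, Summable (fun k => p k * |(μ ᵥ* Q ^ k) y - pi y|) := by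
    intro y
    refine Summable.of_nonneg_of_le (fun k => mul_nonneg (hp0 k) (abs_nonneg _))
      (fun k => mul_le_mul_of_nonneg_left (hD k y) (hp0 k)) (hp1.summable.mul_right 2)
  have h1 : HasSum (fun k => p k * tvDist (μ ᵥ* Q ^ k) pi)
      ((∑ y, ∑' k, p k * |(μ ᵥ* Q ^ k) y - pi y|) / 2) := by
    have := (hasSum_sum (s := Finset.univ) fun y _ => (hsa y).hasSum).div_const 2
    have e : (fun k => p k * tvDist (μ ᵥ* Q ^ k) pi)
        = fun k => (∑ y, p k * |(μ ᵥ* Q ^ k) y - pi y|) / 2 := by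
      funext k
      unfold tvDist
      rw [← Finset.mul_sum, mul_div_assoc]
    rw [e]
    exact this
  have h2 : contDist P pi r μ ≤ (∑ y, ∑' k, p k * |(μ ᵥ* Q ^ k) y - pi y|) / 2 := by
    unfold contDist tvDist
    gcongr with y _
    rw [← (hsum y).tsum_eq]
    have hab : ∀ k, ‖p k * ((μ ᵥ* Q ^ k) y - pi y)‖ = p k * |(μ ᵥ* Q ^ k) y - pi y| := fun k => by
      rw [Real.norm_eq_abs, abs_mul, abs_of_nonneg (hp0 k)]
    have := norm_tsum_le_tsum_norm (f := fun k => p k * ((μ ᵥ* Q ^ k) y - pi y))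
      (by simpa only [hab] using hsa y)
    simpa only [hab, Real.norm_eq_abs] using this
  have h3 : HasSum (fun k => p k * tvDist (μ ᵥ* Q ^ n) pi + if k ∈ Finset.range n then p k else 0)
      (1 * tvDist (μ ᵥ* Q ^ n) pi + ∑ k ∈ Finset.range n, if k ∈ Finset.range n then p k else 0) :=
    (hp1.mul_right _).add (hasSum_sum_of_ne_finset_zero fun k hk => if_neg hk)
  have hNn : 0 ≤ tvDist (μ ᵥ* Q ^ n) pi := by unfold tvDist; positivity
  have h4 := hasSum_le (fun k => ?_) h1 h3
  · refine h2.trans (h4.trans (le_of_eq ?_))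
    rw [one_mul]
    congr 1
    exact Finset.sum_congr rfl fun k hk => if_pos hk
  · split_ifs with hk
    · have := mul_le_mul_of_nonneg_left (hN0 k) (hp0 k)
      have := mul_nonneg (hp0 k) hNn
      linarith
    · rw [add_zero]
      exact mul_le_mul_of_nonneg_left (hanti (by simpa using hk)) (hp0 k)

/-- **Proposition 1.8 (eq. (11)) of Hermon–Peres.**
For every finite irreducible Markov chain (no reversibility needed), every `t ∈ ℕ`,
every `0 < s ≤ √t` and every initial distribution `μ`,
`d_c(t + s√t, μ) ≤ d_L(2t, μ) + e^{-s²/2}`. -/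
theorem cont_dist_le_lazy_dist :
    ∀ (Ω : Type) [Fintype Ω] [DecidableEq Ω]
      (P : Matrix Ω Ω ℝ) (pi : Ω → ℝ), IsMC P pi →
      ∀ (t : ℕ) (s : ℝ), 0 < s → s ≤ Real.sqrt t →
      ∀ μ : Ω → ℝ, IsProbVec μ →
        contDist P pi ((t : ℝ) + s * Real.sqrt t) μ ≤
          lazyDist P pi (2 * (t : ℝ)) μ + Real.exp (-s ^ 2 / 2) := by
  intro Ω _ _ P pi hP t s hs hst μ hμ
  have hq : 0 < Real.sqrt t := hs.trans_le hst
  have hqq : Real.sqrt t ^ 2 = t := Real.sq_sqrt (Nat.cast_nonneg t)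
  set q := Real.sqrt t
  have hfl : ⌊2 * (t : ℝ)⌋₊ = 2 * t := by
    have : (2 * (t : ℝ)) = ((2 * t : ℕ) : ℝ) := by push_cast; ring
    rw [this, Nat.floor_natCast]
  have h1 := aux_main hP hμ (2 * t) (r := (t : ℝ) + s * q) (by positivity)
  have h2 := aux_tail (2 * t) (u := s / q) (by positivity) ((div_le_one hq).2 hst)
  have e1 : ((2 * t : ℕ) : ℝ) * (1 + s / q) = 2 * ((t : ℝ) + s * q) := by
    push_cast
    rw [← hqq]
    field_simp
  have e2 : -(((2 * t : ℕ) : ℝ) * (s / q) ^ 2 / 4) = -s ^ 2 / 2 := by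
    push_cast
    rw [← hqq]
    field_simp
    norm_num
  rw [e1, e2] at h2
  unfold lazyDist
  rw [hfl]
  linarith
end

section
/- Let (Ω_n, P_n, π_n) be a sequence of finite irreducible reversible Markov chains. The sequence exhibits a continuous-time cutoff if and only if it exhibits a lazy cutoff. -/
open Matrix Filter Asymptotics

/-- The sequence of continuous-time chains exhibits cutoff. -/
def ContCutoff {Ω : ℕ → Type} [∀ n, Fintype (Ω n)] [∀ n, DecidableEq (Ω n)]
    (P : ∀ n, Matrix (Ω n) (Ω n) ℝ) (pi : ∀ n, Ω n → ℝ) : Prop :=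
  ∀ ε : ℝ, 0 < ε → ε < 1 →
    Tendsto (fun n => contMix (P n) (pi n) ε / contMix (P n) (pi n) (1 - ε)) atTop (nhds 1)

/-- The sequence of lazy chains exhibits cutoff. -/
def LazyCutoff {Ω : ℕ → Type} [∀ n, Fintype (Ω n)] [∀ n, DecidableEq (Ω n)]
    (P : ∀ n, Matrix (Ω n) (Ω n) ℝ) (pi : ∀ n, Ω n → ℝ) : Prop :=
  ∀ ε : ℝ, 0 < ε → ε < 1 →
    Tendsto (fun n => (lazyMix (P n) (pi n) ε : ℝ) / (lazyMix (P n) (pi n) (1 - ε) : ℝ))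
      atTop (nhds 1)

/-- The sequence of averaged chains exhibits cutoff. -/
def AveCutoff {Ω : ℕ → Type} [∀ n, Fintype (Ω n)] [∀ n, DecidableEq (Ω n)]
    (P : ∀ n, Matrix (Ω n) (Ω n) ℝ) (pi : ∀ n, Ω n → ℝ) : Prop :=
  ∀ ε : ℝ, 0 < ε → ε < 1 →
    Tendsto (fun n => (aveMix (P n) (pi n) ε : ℝ) / (aveMix (P n) (pi n) (1 - ε) : ℝ))
      atTop (nhds 1)

/-- The sequence of continuous-time chains exhibits cutoff with window `w`. -/
def ContCutoffWindow {Ω : ℕ → Type} [∀ n, Fintype (Ω n)] [∀ n, DecidableEq (Ω n)]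
    (P : ∀ n, Matrix (Ω n) (Ω n) ℝ) (pi : ∀ n, Ω n → ℝ) (w : ℕ → ℝ) : Prop :=
  ContCutoff P pi ∧
  (fun n => w n) =o[atTop] (fun n => contMix (P n) (pi n) (1 / 4)) ∧
  ∀ ε : ℝ, 0 < ε → ε ≤ 1 / 4 → ∃ Cε : ℝ, 0 < Cε ∧
    ∀ n, contMix (P n) (pi n) ε - contMix (P n) (pi n) (1 - ε) ≤ Cε * w n

/-- The sequence of averaged chains exhibits cutoff with window `w`. -/
def AveCutoffWindow {Ω : ℕ → Type} [∀ n, Fintype (Ω n)] [∀ n, DecidableEq (Ω n)]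
    (P : ∀ n, Matrix (Ω n) (Ω n) ℝ) (pi : ∀ n, Ω n → ℝ) (w : ℕ → ℝ) : Prop :=
  AveCutoff P pi ∧
  (fun n => w n) =o[atTop] (fun n => (aveMix (P n) (pi n) (1 / 4) : ℝ)) ∧
  ∀ ε : ℝ, 0 < ε → ε ≤ 1 / 4 → ∃ Cε : ℝ, 0 < Cε ∧
    ∀ n, (aveMix (P n) (pi n) ε : ℝ) - (aveMix (P n) (pi n) (1 - ε) : ℝ) ≤ Cε * w n


namespace LazyAux

set_option linter.unusedSectionVars false

/-- Poisson weights. -/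
noncomputable def poi (l : ℝ) (m : ℕ) : ℝ := Real.exp (-l) * l ^ m / (Nat.factorial m)

lemma poi_nonneg {l : ℝ} (hl : 0 ≤ l) (m : ℕ) : 0 ≤ poi l m := by
  unfold poi; positivity

lemma hasSum_poi (l : ℝ) : HasSum (poi l) 1 := by
  have h : HasSum (fun n : ℕ => l ^ n / (Nat.factorial n)) (Real.exp l) := by
    rw [Real.exp_eq_exp_ℝ]
    exact NormedSpace.expSeries_div_hasSum_exp l
  have h2 := h.mul_left (Real.exp (-l))
  rw [← Real.exp_add] at h2
  simp only [neg_add_cancel, Real.exp_zero] at h2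
  have e : poi l = fun n : ℕ => Real.exp (-l) * (l ^ n / (Nat.factorial n)) := by
    funext n; unfold poi; ring
  rw [e]; exact h2

lemma poi_succ (l : ℝ) (m : ℕ) : ((m : ℝ) + 1) * poi l (m + 1) = l * poi l m := by
  unfold poi
  rw [Nat.factorial_succ]
  have : (Nat.factorial m : ℝ) ≠ 0 := by positivity
  have : (m : ℝ) + 1 ≠ 0 := by positivity
  push_cast
  field_simp
  try ring

lemma hasSum_poi_mean (l : ℝ) : HasSum (fun m : ℕ => poi l m * m) l := by
  rw [← hasSum_nat_add_iff' 1]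
  have h := (hasSum_poi l).mul_left l
  simp only [Finset.range_one, Finset.sum_singleton, Nat.cast_zero, mul_zero, sub_zero]
  simp only [mul_one] at h
  have e : (fun m : ℕ => poi l (m + 1) * ((m + 1 : ℕ) : ℝ)) = fun m => l * poi l m := by
    funext m
    rw [← poi_succ]; push_cast; ring
  rw [e]; exact h

lemma hasSum_poi_sq (l : ℝ) : HasSum (fun m : ℕ => poi l m * (m : ℝ) ^ 2) (l ^ 2 + l) := by
  rw [← hasSum_nat_add_iff' 1]
  have h := ((hasSum_poi_mean l).add (hasSum_poi l)).mul_left l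
  have e : (fun m : ℕ => poi l (m + 1) * ((m + 1 : ℕ) : ℝ) ^ 2)
      = fun m : ℕ => l * (poi l m * m + poi l m) := by
    funext m
    have := poi_succ l m
    push_cast
    linear_combination ((m : ℝ) + 1) * this
  have e2 : l ^ 2 + l - ∑ i ∈ Finset.range 1, poi l i * (i : ℝ) ^ 2 = l * (l + 1) := by
    simp; ring
  rw [e, e2]; exact h

lemma hasSum_poi_var (l : ℝ) : HasSum (fun m : ℕ => poi l m * ((m : ℝ) - l) ^ 2) l := by
  have h := ((hasSum_poi_sq l).sub ((hasSum_poi_mean l).mul_left (2 * l))).add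
    ((hasSum_poi l).mul_left (l ^ 2))
  have e : (fun m : ℕ => poi l m * ((m : ℝ) - l) ^ 2)
      = fun m : ℕ => poi l m * (m : ℝ) ^ 2 - 2 * l * (poi l m * m) + l ^ 2 * poi l m := by
    funext m; ring
  have e2 : l ^ 2 + l - 2 * l * l + l ^ 2 * 1 = l := by ring
  rw [e]; rw [e2] at h; exact h

variable {Ω : Type*} [Fintype Ω] [DecidableEq Ω]

/-- Working hypotheses on the lazy kernel. -/
structure LC (Q : Matrix Ω Ω ℝ) (p : Ω → ℝ) : Prop where
  nonneg : ∀ x y, 0 ≤ Q x y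
  row : ∀ x, ∑ y, Q x y = 1
  pnonneg : ∀ x, 0 ≤ p x
  psum : ∑ x, p x = 1
  rev : ∀ x y, p x * Q x y = p y * Q y x
  psd : ∀ g : Ω → ℝ, 0 ≤ ∑ x, p x * (g x * (Q *ᵥ g) x)
  diag : ∀ x, 1 / 2 ≤ Q x x

lemma lc_of_rev {P : Matrix Ω Ω ℝ} {p : Ω → ℝ} (h : IsRevMC P p) : LC (lazyM P) p := by
  obtain ⟨⟨⟨h0, h1⟩, -, ⟨p0, p1⟩, -⟩, hr⟩ := h
  have entry : ∀ x y, lazyM P x y = (2 : ℝ)⁻¹ * ((if x = y then 1 else 0) + P x y) := by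
    intro x y; simp [lazyM, Matrix.one_apply]
  refine ⟨?_, ?_, p0, p1, ?_, ?_, ?_⟩
  · intro x y
    rw [entry]
    have := h0 x y
    split_ifs <;> positivity
  · intro x
    simp only [entry]
    rw [← Finset.mul_sum, Finset.sum_add_distrib, h1 x]
    simp; norm_num
  · intro x y
    rw [entry, entry]
    have := hr x y
    by_cases hxy : x = y
    · subst hxy; rfl
    · have h2 : y ≠ x := fun h => hxy h.symm
      simp only [hxy, h2, if_false]
      linear_combination (2 : ℝ)⁻¹ * this
  · intro g
    have e1 : ∀ x, (lazyM P *ᵥ g) x = ∑ y, (2 : ℝ)⁻¹ * (P x y * (g x + g y)) := by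
      intro x
      have : (lazyM P *ᵥ g) x = (2 : ℝ)⁻¹ * (g x + ∑ y, P x y * g y) := by
        simp only [Matrix.mulVec, dotProduct, entry, mul_assoc, ← Finset.mul_sum, add_mul,
          Finset.sum_add_distrib]
        simp
      rw [this, ← Finset.mul_sum]
      simp only [mul_add, Finset.sum_add_distrib]
      rw [← Finset.sum_mul, h1 x, one_mul]
    have e2 : ∑ x, p x * (g x * (lazyM P *ᵥ g) x)
        = ∑ x, ∑ y, (2 : ℝ)⁻¹ * (p x * P x y * (g x * (g x + g y))) := by
      refine Finset.sum_congr rfl fun x _ => ?_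
      rw [e1, Finset.mul_sum, Finset.mul_sum]
      refine Finset.sum_congr rfl fun y _ => by ring
    have e3 : ∑ x, p x * (g x * (lazyM P *ᵥ g) x)
        = ∑ x, ∑ y, (2 : ℝ)⁻¹ * (p x * P x y * (g y * (g x + g y))) := by
      rw [e2, Finset.sum_comm]
      refine Finset.sum_congr rfl fun x _ => Finset.sum_congr rfl fun y _ => ?_
      rw [hr y x]; ring
    have e4 : 2 * ∑ x, p x * (g x * (lazyM P *ᵥ g) x)
        = ∑ x, ∑ y, (2 : ℝ)⁻¹ * (p x * P x y * (g x + g y) ^ 2) := by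
      rw [two_mul]
      nth_rewrite 1 [e2]
      rw [e3]
      simp only [← Finset.sum_add_distrib]
      refine Finset.sum_congr rfl fun x _ => Finset.sum_congr rfl fun y _ => by ring
    have : 0 ≤ ∑ x, ∑ y, (2 : ℝ)⁻¹ * (p x * P x y * (g x + g y) ^ 2) :=
      Finset.sum_nonneg fun x _ => Finset.sum_nonneg fun y _ => by
        have := p0 x
        have := h0 x y
        positivity
    linarith
  · intro x
    rw [entry]
    have := h0 x x
    simp; linarith

section basic
variable {Q : Matrix Ω Ω ℝ} {p : Ω → ℝ}

lemma LC.pow_nonneg (h : LC Q p) (m : ℕ) : ∀ x y, 0 ≤ (Q ^ m) x y := by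
  induction m with
  | zero => intro x y; rw [pow_zero, Matrix.one_apply]; split_ifs <;> norm_num
  | succ m ih =>
    intro x y
    rw [pow_succ, Matrix.mul_apply]
    exact Finset.sum_nonneg fun z _ => mul_nonneg (ih x z) (h.nonneg z y)

lemma LC.pow_row (h : LC Q p) (m : ℕ) : ∀ x, ∑ y, (Q ^ m) x y = 1 := by
  induction m with
  | zero => intro x; simp [Matrix.one_apply]
  | succ m ih =>
    intro x
    simp only [pow_succ, Matrix.mul_apply]
    rw [Finset.sum_comm]
    simp only [← Finset.mul_sum, h.row, mul_one, ih]

lemma LC.pow_diag (h : LC Q p) (m : ℕ) (x : Ω) : (1 / 2 : ℝ) ^ m ≤ (Q ^ m) x x := by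
  induction m with
  | zero => simp
  | succ m ih =>
    rw [pow_succ, pow_succ, Matrix.mul_apply]
    calc (1 / 2 : ℝ) ^ m * (1 / 2) ≤ (Q ^ m) x x * Q x x :=
          mul_le_mul ih (h.diag x) (by norm_num) (h.pow_nonneg m x x)
      _ ≤ _ := Finset.single_le_sum (f := fun z => (Q ^ m) x z * Q z x)
          (fun z _ => mul_nonneg (h.pow_nonneg m x z) (h.nonneg z x)) (Finset.mem_univ x)

lemma LC.stat (h : LC Q p) (y : Ω) : ∑ x, p x * Q x y = p y := by
  simp only [h.rev _ y, ← Finset.mul_sum, h.row, mul_one]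

/-- self-adjointness -/
lemma LC.adj (h : LC Q p) (f g : Ω → ℝ) :
    ∑ x, p x * ((Q *ᵥ f) x * g x) = ∑ x, p x * (f x * (Q *ᵥ g) x) := by
  simp only [Matrix.mulVec, dotProduct, Finset.sum_mul, Finset.mul_sum]
  rw [Finset.sum_comm]
  refine Finset.sum_congr rfl fun x _ => Finset.sum_congr rfl fun y _ => ?_
  have := h.rev x y
  linear_combination (-(f x) * g y) * this

lemma LC.adj_pow (h : LC Q p) (m : ℕ) (f g : Ω → ℝ) :
    ∑ x, p x * (((Q ^ m) *ᵥ f) x * g x) = ∑ x, p x * (f x * ((Q ^ m) *ᵥ g) x) := by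
  induction m generalizing f g with
  | zero => simp
  | succ m ih =>
    rw [pow_succ, ← Matrix.mulVec_mulVec, ih, h.adj, Matrix.mulVec_mulVec, ← pow_succ', pow_succ]

lemma LC.psd_pow (h : LC Q p) (m : ℕ) (g : Ω → ℝ) : 0 ≤ ∑ x, p x * (g x * ((Q ^ m) *ᵥ g) x) := by
  rcases Nat.even_or_odd' m with ⟨j, rfl | rfl⟩
  · rw [two_mul, pow_add, ← Matrix.mulVec_mulVec, ← h.adj_pow]
    exact Finset.sum_nonneg fun x _ => mul_nonneg (h.pnonneg x) (mul_self_nonneg _)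
  · have : Q ^ (2 * j + 1) = Q ^ j * (Q * Q ^ j) := by
      rw [← pow_succ', ← pow_add]; congr 1; ring
    rw [this, ← Matrix.mulVec_mulVec, ← h.adj_pow, ← Matrix.mulVec_mulVec]
    exact h.psd _

/-- Dirichlet form is nonnegative. -/
lemma LC.dirichlet (h : LC Q p) (g : Ω → ℝ) :
    0 ≤ ∑ x, p x * (g x * g x) - ∑ x, p x * (g x * (Q *ᵥ g) x) := by
  have e2 : ∑ x, p x * (g x * g x) - ∑ x, p x * (g x * (Q *ᵥ g) x)
      = ∑ x, ∑ y, (p x * Q x y * (g x * (g x - g y))) := by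
    rw [← Finset.sum_sub_distrib]
    refine Finset.sum_congr rfl fun x _ => ?_
    have : g x = ∑ y, Q x y * g x := by rw [← Finset.sum_mul, h.row, one_mul]
    have e : g x - (Q *ᵥ g) x = ∑ y, Q x y * (g x - g y) := by
      simp only [mul_sub, Finset.sum_sub_distrib, ← this]; rfl
    rw [← mul_sub, ← mul_sub, e, Finset.mul_sum, Finset.mul_sum]
    refine Finset.sum_congr rfl fun y _ => by ring
  have e3 : ∑ x, p x * (g x * g x) - ∑ x, p x * (g x * (Q *ᵥ g) x)
      = ∑ x, ∑ y, (p x * Q x y * (g y * (g y - g x))) := by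
    rw [e2, Finset.sum_comm]
    refine Finset.sum_congr rfl fun x _ => Finset.sum_congr rfl fun y _ => ?_
    rw [h.rev y x]
  have e4 : 2 * (∑ x, p x * (g x * g x) - ∑ x, p x * (g x * (Q *ᵥ g) x))
      = ∑ x, ∑ y, (p x * Q x y * (g x - g y) ^ 2) := by
    rw [two_mul]
    nth_rewrite 1 [e2]
    rw [e3]
    simp only [← Finset.sum_add_distrib]
    refine Finset.sum_congr rfl fun x _ => Finset.sum_congr rfl fun y _ => by ring
  have : 0 ≤ ∑ x, ∑ y, (p x * Q x y * (g x - g y) ^ 2) :=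
    Finset.sum_nonneg fun x _ => Finset.sum_nonneg fun y _ => by
      have := h.pnonneg x
      have := h.nonneg x y
      positivity
  linarith

end basic

section maximal
variable {Q : Matrix Ω Ω ℝ} {p : Ω → ℝ}

/-- Autocorrelation sequence. -/
noncomputable def ac (Q : Matrix Ω Ω ℝ) (p f : Ω → ℝ) (i : ℕ) : ℝ :=
  ∑ x, p x * (f x * ((Q ^ i) *ᵥ f) x)


lemma LC.ac_add (h : LC Q p) (f : Ω → ℝ) (i j : ℕ) :
    ∑ x, p x * (((Q ^ i) *ᵥ f) x * ((Q ^ j) *ᵥ f) x) = ac Q p f (i + j) := by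
  rw [h.adj_pow, Matrix.mulVec_mulVec, ← pow_add]; rfl

lemma LC.ac_nonneg (h : LC Q p) (f : Ω → ℝ) (i : ℕ) : 0 ≤ ac Q p f i := h.psd_pow i f

lemma LC.ac_convex (h : LC Q p) (f : Ω → ℝ) (i : ℕ) :
    0 ≤ (ac Q p f i - ac Q p f (i + 1)) - (ac Q p f (i + 1) - ac Q p f (i + 2)) := by
  have := h.psd_pow i (f - Q *ᵥ f)
  have e : ∑ x, p x * ((f - Q *ᵥ f) x * ((Q ^ i) *ᵥ (f - Q *ᵥ f)) x)
      = (ac Q p f i - ac Q p f (i + 1)) - (ac Q p f (i + 1) - ac Q p f (i + 2)) := by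
    have e1 : (Q ^ i) *ᵥ (Q *ᵥ f) = (Q ^ (i + 1)) *ᵥ f := by
      rw [Matrix.mulVec_mulVec, ← pow_succ]
    have e2 := h.ac_add f 1 (i + 1)
    have e3 := h.ac_add f 1 i
    rw [pow_one] at e2 e3
    rw [Matrix.mulVec_sub, e1]
    rw [show i + 2 = 1 + (i + 1) by ring, ← e2]
    conv_rhs => rw [show ac Q p f i - ac Q p f (i + 1) - (ac Q p f (i + 1) -
      ∑ x, p x * ((Q *ᵥ f) x * ((Q ^ (i + 1)) *ᵥ f) x)) = ac Q p f i - ac Q p f (i + 1) -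
      (ac Q p f (1 + i) - ∑ x, p x * ((Q *ᵥ f) x * ((Q ^ (i + 1)) *ᵥ f) x)) by
        rw [add_comm 1 i]]
    rw [← e3]
    unfold ac
    simp only [← Finset.sum_sub_distrib]
    refine Finset.sum_congr rfl fun x _ => ?_
    simp only [Pi.sub_apply]
    ring
  linarith

lemma LC.ac_dec (h : LC Q p) (f : Ω → ℝ) (i : ℕ) : 0 ≤ ac Q p f i - ac Q p f (i + 1) := by
  have even : ∀ j, 0 ≤ ac Q p f (2 * j) - ac Q p f (2 * j + 1) := by
    intro j
    have := h.dirichlet ((Q ^ j) *ᵥ f)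
    rw [h.ac_add, Matrix.mulVec_mulVec, ← pow_succ', h.ac_add] at this
    rw [show 2 * j + 1 = j + (j + 1) by ring, show 2 * j = j + j by ring]
    exact this
  rcases Nat.even_or_odd' i with ⟨j, rfl | rfl⟩
  · exact even j
  · have h1 := even (j + 1)
    have h2 := h.ac_convex f (2 * j + 1)
    rw [show 2 * (j + 1) = 2 * j + 1 + 1 by ring] at h1
    rw [show 2 * j + 1 + 2 = 2 * j + 1 + 1 + 1 by ring] at h2
    linarith

lemma LC.ac_anti (h : LC Q p) (f : Ω → ℝ) : Antitone (ac Q p f) :=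
  antitone_nat_of_succ_le fun i => by linarith [h.ac_dec f i]

lemma LC.ac_diff_anti (h : LC Q p) (f : Ω → ℝ) : Antitone (fun i => ac Q p f i - ac Q p f (i + 1)) :=
  antitone_nat_of_succ_le fun i => by linarith [h.ac_convex f i]

lemma LC.ac_double (h : LC Q p) (f : Ω → ℝ) (h0 : ac Q p f 0 ≤ 1) (i : ℕ) :
    ac Q p f i ^ 2 ≤ ac Q p f (2 * i) := by
  -- from the nonnegativity of a square
  set a := ac Q p f i with ha
  have h1 : 0 ≤ ∑ x, p x * ((((Q ^ i) *ᵥ f) x - a * f x) ^ 2) :=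
    Finset.sum_nonneg fun x _ => mul_nonneg (h.pnonneg x) (sq_nonneg _)
  have e : ∑ x, p x * ((((Q ^ i) *ᵥ f) x - a * f x) ^ 2)
      = ac Q p f (2 * i) - 2 * a * a + a ^ 2 * ac Q p f 0 := by
    rw [two_mul i, ← h.ac_add f i i]
    nth_rewrite 3 [ha]
    unfold ac
    simp only [Finset.mul_sum, ← Finset.sum_sub_distrib, ← Finset.sum_add_distrib]
    refine Finset.sum_congr rfl fun x _ => ?_
    simp only [pow_zero, Matrix.one_mulVec]
    ring
  have : a ^ 2 * ac Q p f 0 ≤ a ^ 2 * 1 := mul_le_mul_of_nonneg_left h0 (sq_nonneg _)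
  nlinarith

lemma LC.ac_pow (h : LC Q p) (f : Ω → ℝ) (h0 : ac Q p f 0 ≤ 1) (J r : ℕ) :
    ac Q p f J ^ (2 ^ r) ≤ ac Q p f (2 ^ r * J) := by
  induction r with
  | zero => simp
  | succ r ih =>
    calc ac Q p f J ^ (2 ^ (r + 1)) = (ac Q p f J ^ (2 ^ r)) ^ 2 := by rw [← pow_mul, pow_succ]
      _ ≤ (ac Q p f (2 ^ r * J)) ^ 2 :=
        pow_le_pow_left₀ (_root_.pow_nonneg (h.ac_nonneg f J) _) ih 2
      _ ≤ ac Q p f (2 * (2 ^ r * J)) := h.ac_double f h0 _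
      _ = _ := by congr 1; ring

lemma LC.mean_abs (h : LC Q p) (g : Ω → ℝ) {c : ℝ} (hc : 0 < c) :
    ∑ x, p x * |g x| ≤ (c + (∑ x, p x * (g x) ^ 2) / c) / 2 := by
  have : ∀ x, p x * |g x| ≤ (c / 2) * p x + (p x * (g x) ^ 2) / (2 * c) := by
    intro x
    have h1 : |g x| ≤ c / 2 + (g x) ^ 2 / (2 * c) := by
      rw [← sq_abs (g x)]
      have : 0 ≤ (|g x| - c) ^ 2 / (2 * c) := by positivity
      have e : (|g x| - c) ^ 2 / (2 * c) = c / 2 + |g x| ^ 2 / (2 * c) - |g x| := by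
        field_simp; ring
      linarith
    have := mul_le_mul_of_nonneg_left h1 (h.pnonneg x)
    calc _ ≤ _ := this
      _ = _ := by ring
  calc _ ≤ ∑ x, ((c / 2) * p x + (p x * (g x) ^ 2) / (2 * c)) := Finset.sum_le_sum fun x _ => this x
    _ = _ := by
      rw [Finset.sum_add_distrib, ← Finset.mul_sum, h.psum, ← Finset.sum_div]
      field_simp

/-- L2 maximal-type estimate. -/
lemma LC.maximal (h : LC Q p) (f : Ω → ℝ) {J k : ℕ} (hJ : 1 ≤ J) {β : ℝ} (hβ : 0 < β)
    (hb : ac Q p f J ≤ β ^ 2) :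
    ∃ S : Ω → ℝ, (∀ j, J ≤ j → j ≤ J + k → ∀ y, |((Q ^ j) *ᵥ f) y| ≤ S y) ∧
      ∑ y, p y * S y ≤ β * (2 + k / J) := by
  refine ⟨fun y => |((Q ^ J) *ᵥ f) y| + ∑ i ∈ Finset.range k,
    |((Q ^ (J + i)) *ᵥ f - (Q ^ (J + (i + 1))) *ᵥ f) y|, ?_, ?_⟩
  · intro j hj hjk y
    obtain ⟨i, rfl⟩ := Nat.exists_eq_add_of_le hj
    have hi : i ≤ k := by omega
    have key : |((Q ^ (J + i)) *ᵥ f) y| ≤ |((Q ^ J) *ᵥ f) y| + ∑ i ∈ Finset.range i,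
        |((Q ^ (J + i)) *ᵥ f - (Q ^ (J + (i + 1))) *ᵥ f) y| := by
      clear hi hjk hj
      induction i with
      | zero => simp
      | succ i ih =>
        rw [Finset.sum_range_succ]
        have : |((Q ^ (J + (i + 1))) *ᵥ f) y| ≤ |((Q ^ (J + i)) *ᵥ f) y| +
            |((Q ^ (J + i)) *ᵥ f - (Q ^ (J + (i + 1))) *ᵥ f) y| := by
          rw [Pi.sub_apply, abs_sub_comm (((Q ^ (J + i)) *ᵥ f) y)]
          have := abs_add_le (((Q ^ (J + i)) *ᵥ f) y)
            (((Q ^ (J + (i + 1))) *ᵥ f) y - ((Q ^ (J + i)) *ᵥ f) y)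
          simpa using this
        linarith
    refine key.trans ?_
    have := Finset.sum_le_sum_of_subset_of_nonneg
      (f := fun i => |((Q ^ (J + i)) *ᵥ f - (Q ^ (J + (i + 1))) *ᵥ f) y|)
      (Finset.range_mono hi) (fun _ _ _ => abs_nonneg _)
    linarith
  · set d : ℕ → ℝ := fun i => ac Q p f i - ac Q p f (i + 1) with hd
    have danti : Antitone d := h.ac_diff_anti f
    have dnn : ∀ i, 0 ≤ d i := h.ac_dec f
    have hJ' : (0 : ℝ) < J := by exact_mod_cast hJ
    have D : ∀ i, ∑ x, p x * (((Q ^ (J + i)) *ᵥ f - (Q ^ (J + (i + 1))) *ᵥ f) x) ^ 2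
        ≤ d (2 * (J + i)) - d (2 * (J + (i + 1))) := by
      intro i
      have e : ∑ x, p x * (((Q ^ (J + i)) *ᵥ f - (Q ^ (J + (i + 1))) *ᵥ f) x) ^ 2
          = d (2 * (J + i)) - d (2 * (J + i) + 1) := by
        have e1 := h.ac_add f (J + i) (J + i)
        have e2 := h.ac_add f (J + i) (J + (i + 1))
        have e3 := h.ac_add f (J + (i + 1)) (J + (i + 1))
        simp only [hd]
        rw [show 2 * (J + i) + 1 + 1 = J + (i + 1) + (J + (i + 1)) by ring,
          show 2 * (J + i) + 1 = J + i + (J + (i + 1)) by ring,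
          show 2 * (J + i) = J + i + (J + i) by ring, ← e1, ← e2, ← e3]
        simp only [← Finset.sum_sub_distrib]
        refine Finset.sum_congr rfl fun x _ => ?_
        simp only [Pi.sub_apply]
        ring
      rw [e]
      have := danti (show 2 * (J + i) + 1 ≤ 2 * (J + (i + 1)) by omega)
      linarith
    have Dsum : ∑ i ∈ Finset.range k,
        ∑ x, p x * (((Q ^ (J + i)) *ᵥ f - (Q ^ (J + (i + 1))) *ᵥ f) x) ^ 2 ≤ d (2 * J) := by
      calc _ ≤ ∑ i ∈ Finset.range k, (d (2 * (J + i)) - d (2 * (J + (i + 1)))) :=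
            Finset.sum_le_sum fun i _ => D i
        _ = d (2 * (J + 0)) - d (2 * (J + k)) :=
            Finset.sum_range_sub' (fun i => d (2 * (J + i))) k
        _ ≤ _ := by have := dnn (2 * (J + k)); simp only [add_zero]; linarith
    have dJ : (J : ℝ) * d (2 * J) ≤ β ^ 2 := by
      have : ∑ i ∈ Finset.range J, d (2 * J) ≤ ∑ i ∈ Finset.range J, d (J + i) :=
        Finset.sum_le_sum fun i hi => danti (by have := Finset.mem_range.1 hi; omega)
      rw [Finset.sum_const, Finset.card_range, nsmul_eq_mul] at this
      have e : ∑ i ∈ Finset.range J, d (J + i) = ac Q p f (J + 0) - ac Q p f (J + J) :=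
        Finset.sum_range_sub' (fun i => ac Q p f (J + i)) J
      have := h.ac_nonneg f (J + J)
      simp only [add_zero] at e
      linarith
    have A1 : ∑ x, p x * |((Q ^ J) *ᵥ f) x| ≤ β := by
      have := h.mean_abs ((Q ^ J) *ᵥ f) hβ
      have e : ∑ x, p x * (((Q ^ J) *ᵥ f) x) ^ 2 = ac Q p f (J + J) := by
        rw [← h.ac_add]; refine Finset.sum_congr rfl fun x _ => by ring
      have l : ac Q p f (J + J) ≤ β ^ 2 := (h.ac_anti f (by omega)).trans hb
      rw [e] at this
      have : ac Q p f (J + J) / β ≤ β := by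
        rw [div_le_iff₀ hβ]; linarith
      linarith
    have A2 : ∑ i ∈ Finset.range k,
        ∑ x, p x * |((Q ^ (J + i)) *ᵥ f - (Q ^ (J + (i + 1))) *ᵥ f) x| ≤
          (k * (β / J) + β) / 2 := by
      have hc : 0 < β / J := by positivity
      calc _ ≤ ∑ i ∈ Finset.range k, (β / J +
            (∑ x, p x * (((Q ^ (J + i)) *ᵥ f - (Q ^ (J + (i + 1))) *ᵥ f) x) ^ 2) / (β / J)) / 2 :=
            Finset.sum_le_sum fun i _ => h.mean_abs _ hc
        _ = (k * (β / J) + (∑ i ∈ Finset.range k,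
            ∑ x, p x * (((Q ^ (J + i)) *ᵥ f - (Q ^ (J + (i + 1))) *ᵥ f) x) ^ 2) / (β / J)) / 2 := by
            rw [← Finset.sum_div, Finset.sum_add_distrib, Finset.sum_const, Finset.card_range,
              nsmul_eq_mul, ← Finset.sum_div]
        _ ≤ _ := by
            have : (∑ i ∈ Finset.range k, ∑ x, p x *
              (((Q ^ (J + i)) *ᵥ f - (Q ^ (J + (i + 1))) *ᵥ f) x) ^ 2) / (β / J) ≤ β := by
              rw [div_le_iff₀ hc]
              refine Dsum.trans ?_
              rw [mul_div_assoc', le_div_iff₀ hJ']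
              linarith
            linarith
    have e : ∑ y, p y * (|((Q ^ J) *ᵥ f) y| + ∑ i ∈ Finset.range k,
        |((Q ^ (J + i)) *ᵥ f - (Q ^ (J + (i + 1))) *ᵥ f) y|) =
        ∑ x, p x * |((Q ^ J) *ᵥ f) x| + ∑ i ∈ Finset.range k,
        ∑ x, p x * |((Q ^ (J + i)) *ᵥ f - (Q ^ (J + (i + 1))) *ᵥ f) x| := by
      simp only [mul_add, Finset.sum_add_distrib, Finset.mul_sum]
      rw [Finset.sum_comm (s := Finset.univ)]
    rw [e]
    have e' : β * (2 + k / J) = 2 * β + k * (β / J) := by ring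
    rw [e']
    have : 0 ≤ k * (β / J) := by positivity
    linarith

end maximal

section dist

lemma tv_ge {μ ν : Ω → ℝ} (hs : ∑ x, μ x = ∑ x, ν x) {g : Ω → ℝ} (g0 : ∀ x, 0 ≤ g x)
    (g1 : ∀ x, g x ≤ 1) : ∑ x, μ x * g x - ∑ x, ν x * g x ≤ tvDist μ ν := by
  have e : ∑ x, μ x * g x - ∑ x, ν x * g x = ∑ x, (μ x - ν x) * (g x - 1 / 2) := by
    have : ∑ x, (μ x - ν x) * (g x - 1 / 2) =
        ∑ x, μ x * g x - ∑ x, ν x * g x - (1 / 2) * (∑ x, μ x - ∑ x, ν x) := by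
      simp only [mul_sub, Finset.mul_sum, ← Finset.sum_sub_distrib]
      refine Finset.sum_congr rfl fun x _ => by ring
    rw [this, hs]; ring
  rw [e, tvDist, Finset.sum_div]
  refine Finset.sum_le_sum fun x _ => ?_
  calc (μ x - ν x) * (g x - 1 / 2) ≤ |(μ x - ν x) * (g x - 1 / 2)| := le_abs_self _
    _ = |μ x - ν x| * |g x - 1 / 2| := abs_mul _ _
    _ ≤ |μ x - ν x| * (1 / 2) := by
      refine mul_le_mul_of_nonneg_left ?_ (abs_nonneg _)
      rw [abs_le]; constructor <;> linarith [g0 x, g1 x]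
    _ = _ := by ring

lemma tv_le {μ ν : Ω → ℝ} (hs : ∑ x, μ x = ∑ x, ν x) {c : ℝ}
    (hc : ∀ g : Ω → ℝ, (∀ x, 0 ≤ g x) → (∀ x, g x ≤ 1) →
      ∑ x, μ x * g x - ∑ x, ν x * g x ≤ c) : tvDist μ ν ≤ c := by
  refine le_trans (le_of_eq ?_) (hc (fun x => if ν x ≤ μ x then 1 else 0)
    (fun x => by split_ifs <;> norm_num) (fun x => by split_ifs <;> norm_num))
  have : tvDist μ ν = tvDist μ ν + (1 / 2) * (∑ x, μ x - ∑ x, ν x) := by rw [hs]; ring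
  rw [this, tvDist]
  simp only [Finset.sum_div, Finset.mul_sum, ← Finset.sum_sub_distrib, ← Finset.sum_add_distrib]
  refine Finset.sum_congr rfl fun x _ => ?_
  split_ifs with hx
  · rw [abs_of_nonneg (by linarith)]; ring
  · rw [abs_of_neg (by linarith)]; ring

/-- Poissonized kernel. -/
noncomputable def hM (Q : Matrix Ω Ω ℝ) (l : ℝ) (x y : Ω) : ℝ := ∑' m, poi l m * (Q ^ m) x y

noncomputable def dL (Q : Matrix Ω Ω ℝ) (p : Ω → ℝ) (k : ℕ) : ℝ := ⨆ x, tvDist ((Q ^ k) x) p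
noncomputable def dC (Q : Matrix Ω Ω ℝ) (p : Ω → ℝ) (l : ℝ) : ℝ := ⨆ x, tvDist (hM Q l x) p

lemma delta_vecMul (x : Ω) (M : Matrix Ω Ω ℝ) : deltaMass x ᵥ* M = M x := by
  funext y
  simp [Matrix.vecMul, dotProduct, deltaMass]

lemma lazyDistMax_eq (P : Matrix Ω Ω ℝ) (p : Ω → ℝ) (k : ℕ) :
    lazyDistMax P p (k : ℝ) = dL (lazyM P) p k := by
  unfold lazyDistMax dL lazyDist
  simp only [Nat.floor_natCast, delta_vecMul]

section expo
attribute [local instance] Matrix.linftyOpNormedRing Matrix.linftyOpNormedAlgebra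

lemma hasSum_exp_entry (A : Matrix Ω Ω ℝ) (s : ℝ) (x y : Ω) :
    HasSum (fun k : ℕ => s ^ k / (Nat.factorial k) * (A ^ k) x y)
      ((NormedSpace.exp (s • A)) x y) := by
  have h : HasSum (fun n : ℕ => ((Nat.factorial n : ℝ)⁻¹) • (s • A) ^ n)
      (NormedSpace.exp (s • A)) := NormedSpace.exp_series_hasSum_exp' (𝕂 := ℝ) (s • A)
  have h2 := (Pi.hasSum.1 ((Pi.hasSum.1 h) x)) y
  have e : (fun k : ℕ => s ^ k / (Nat.factorial k) * (A ^ k) x y) =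
      fun n : ℕ => (((Nat.factorial n : ℝ)⁻¹) • (s • A) ^ n) x y := by
    funext k
    rw [smul_pow, Matrix.smul_apply, Matrix.smul_apply, smul_eq_mul, smul_eq_mul]
    ring
  rw [e]
  exact h2

lemma exp_lazy (P : Matrix Ω Ω ℝ) (t : ℝ) :
    NormedSpace.exp ((2 * t) • lazyM P) = Real.exp t • NormedSpace.exp (t • P) := by
  have e : (2 * t) • lazyM P = t • (1 : Matrix Ω Ω ℝ) + t • P := by
    rw [lazyM, smul_smul, ← smul_add]; congr 1; ring
  rw [e, Matrix.exp_add_of_commute]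
  · have e1 : t • (1 : Matrix Ω Ω ℝ) = Matrix.diagonal (fun _ => t) :=
      Matrix.smul_one_eq_diagonal t
    have e2 : NormedSpace.exp (fun _ : Ω => t) = fun _ => Real.exp t := by
      funext x
      rw [Pi.coe_exp, Real.exp_eq_exp_ℝ]
    rw [e1, Matrix.exp_diagonal, e2, ← Matrix.smul_one_eq_diagonal, smul_mul_assoc, one_mul]
  · exact ((Commute.one_left P).smul_left t).smul_right t

lemma cont_entry (P : Matrix Ω Ω ℝ) (t : ℝ) (x y : Ω) :
    ∑' k : ℕ, Real.exp (-t) * t ^ k / (Nat.factorial k) * (P ^ k) x y = hM (lazyM P) (2 * t) x y := by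
  have h1 := (hasSum_exp_entry P t x y).mul_left (Real.exp (-t))
  have h2 := (hasSum_exp_entry (lazyM P) (2 * t) x y).mul_left (Real.exp (-(2 * t)))
  have e1 : ∑' k : ℕ, Real.exp (-t) * t ^ k / (Nat.factorial k) * (P ^ k) x y
      = Real.exp (-t) * (NormedSpace.exp (t • P)) x y := by
    rw [← h1.tsum_eq]; congr 1; funext k; ring
  have e2 : hM (lazyM P) (2 * t) x y
      = Real.exp (-(2 * t)) * (NormedSpace.exp ((2 * t) • lazyM P)) x y := by
    rw [← h2.tsum_eq, hM]; congr 1; funext k; unfold poi; ring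
  rw [e1, e2, exp_lazy, Matrix.smul_apply, smul_eq_mul, ← mul_assoc, ← Real.exp_add]
  congr 2; ring

end expo

lemma contDistMax_eq (P : Matrix Ω Ω ℝ) (p : Ω → ℝ) (t : ℝ) :
    contDistMax P p t = dC (lazyM P) p (2 * t) := by
  unfold contDistMax dC contDist
  simp only [delta_vecMul, cont_entry]

variable {Q : Matrix Ω Ω ℝ} {p : Ω → ℝ}

lemma LC.entry_le (h : LC Q p) (m : ℕ) (x y : Ω) : (Q ^ m) x y ≤ 1 := by
  rw [← h.pow_row m x]
  exact Finset.single_le_sum (f := fun y => (Q ^ m) x y) (fun z _ => h.pow_nonneg m x z)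
    (Finset.mem_univ y)

lemma LC.hasSum_hM (h : LC Q p) {l : ℝ} (hl : 0 ≤ l) (x y : Ω) :
    HasSum (fun m => poi l m * (Q ^ m) x y) (hM Q l x y) := by
  refine Summable.hasSum ?_
  refine Summable.of_nonneg_of_le (fun m => mul_nonneg (poi_nonneg hl m) (h.pow_nonneg m x y))
    (fun m => ?_) (hasSum_poi l).summable
  calc _ ≤ poi l m * 1 := mul_le_mul_of_nonneg_left (h.entry_le m x y) (poi_nonneg hl m)
    _ = _ := mul_one _

lemma LC.hasSum_hM_fun (h : LC Q p) {l : ℝ} (hl : 0 ≤ l) (x : Ω) (u : Ω → ℝ) :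
    HasSum (fun m => poi l m * ((Q ^ m) *ᵥ u) x) (∑ y, hM Q l x y * u y) := by
  have := hasSum_sum (s := Finset.univ) (fun y _ => (h.hasSum_hM hl x y).mul_right (u y))
  have e : (fun m => poi l m * ((Q ^ m) *ᵥ u) x) =
      fun m => ∑ y, poi l m * (Q ^ m) x y * u y := by
    funext m
    simp only [Matrix.mulVec, dotProduct, Finset.mul_sum, mul_assoc]
  rw [e]; exact this

lemma LC.hM_row (h : LC Q p) {l : ℝ} (hl : 0 ≤ l) (x : Ω) : ∑ y, hM Q l x y = 1 := by
  have := h.hasSum_hM_fun hl x (fun _ => 1)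
  have e : (fun m => poi l m * ((Q ^ m) *ᵥ (fun _ => (1 : ℝ))) x) = poi l := by
    funext m
    simp [Matrix.mulVec, dotProduct, h.pow_row]
  rw [e] at this
  have := this.unique (hasSum_poi l)
  simpa using this

lemma LC.dL_ge (h : LC Q p) (k : ℕ) (x : Ω) {g : Ω → ℝ} (g0 : ∀ x, 0 ≤ g x) (g1 : ∀ x, g x ≤ 1) :
    ((Q ^ k) *ᵥ g) x - ∑ y, p y * g y ≤ dL Q p k :=
  (tv_ge (μ := (Q ^ k) x) (ν := p) (by rw [h.pow_row, h.psum]) g0 g1).trans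
    (le_ciSup (f := fun x => tvDist ((Q ^ k) x) p) (Set.finite_range _).bddAbove x)

lemma LC.dC_ge (h : LC Q p) {l : ℝ} (hl : 0 ≤ l) (x : Ω) {g : Ω → ℝ} (g0 : ∀ x, 0 ≤ g x) (g1 : ∀ x, g x ≤ 1) :
    ∑ y, hM Q l x y * g y - ∑ y, p y * g y ≤ dC Q p l :=
  (tv_ge (μ := hM Q l x) (ν := p) (by rw [h.hM_row hl, h.psum]) g0 g1).trans
    (le_ciSup (f := fun x => tvDist (hM Q l x) p) (Set.finite_range _).bddAbove x)

lemma LC.dL_le (h : LC Q p) [Nonempty Ω] {k : ℕ} {c : ℝ}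
    (hc : ∀ x, ∀ g : Ω → ℝ, (∀ x, 0 ≤ g x) → (∀ x, g x ≤ 1) →
      ((Q ^ k) *ᵥ g) x - ∑ y, p y * g y ≤ c) : dL Q p k ≤ c :=
  ciSup_le fun x => tv_le (by rw [h.pow_row, h.psum]) (hc x)

lemma LC.dC_le (h : LC Q p) [Nonempty Ω] {l : ℝ} (hl : 0 ≤ l) {c : ℝ}
    (hc : ∀ x, ∀ g : Ω → ℝ, (∀ x, 0 ≤ g x) → (∀ x, g x ≤ 1) →
      ∑ y, hM Q l x y * g y - ∑ y, p y * g y ≤ c) : dC Q p l ≤ c :=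
  ciSup_le fun x => tv_le (by rw [h.hM_row hl, h.psum]) (hc x)

lemma LC.mean_pow (h : LC Q p) (m : ℕ) (g : Ω → ℝ) : ∑ y, p y * ((Q ^ m) *ᵥ g) y = ∑ y, p y * g y := by
  have := h.adj_pow m g (fun _ => 1)
  have e : (Q ^ m) *ᵥ (fun _ => (1 : ℝ)) = fun _ => 1 := by
    funext x; simp [Matrix.mulVec, dotProduct, h.pow_row]
  rw [e] at this
  simpa using this

lemma LC.pow_mem (h : LC Q p) (m : ℕ) {g : Ω → ℝ} (g0 : ∀ x, 0 ≤ g x) (g1 : ∀ x, g x ≤ 1) :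
    (∀ x, 0 ≤ ((Q ^ m) *ᵥ g) x) ∧ ∀ x, ((Q ^ m) *ᵥ g) x ≤ 1 := by
  refine ⟨fun x => Finset.sum_nonneg fun y _ => mul_nonneg (h.pow_nonneg m x y) (g0 y), fun x => ?_⟩
  rw [← h.pow_row m x]
  refine Finset.sum_le_sum fun y _ => ?_
  calc _ ≤ (Q ^ m) x y * 1 := mul_le_mul_of_nonneg_left (g1 y) (h.pow_nonneg m x y)
    _ = _ := mul_one _

lemma LC.mean_mem (h : LC Q p) {g : Ω → ℝ} (g0 : ∀ x, 0 ≤ g x) (g1 : ∀ x, g x ≤ 1) :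
    0 ≤ ∑ y, p y * g y ∧ ∑ y, p y * g y ≤ 1 := by
  refine ⟨Finset.sum_nonneg fun y _ => mul_nonneg (h.pnonneg y) (g0 y), ?_⟩
  rw [← h.psum]
  refine Finset.sum_le_sum fun y _ => ?_
  calc _ ≤ p y * 1 := mul_le_mul_of_nonneg_left (g1 y) (h.pnonneg y)
    _ = _ := mul_one _

lemma LC.dL_anti (h : LC Q p) [Nonempty Ω] : Antitone (dL Q p) := by
  intro k m hkm
  obtain ⟨j, rfl⟩ := Nat.exists_eq_add_of_le hkm
  refine h.dL_le fun x g g0 g1 => ?_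
  obtain ⟨a, b⟩ := h.pow_mem j g0 g1
  have := h.dL_ge k x a b
  rwa [Matrix.mulVec_mulVec, ← pow_add, h.mean_pow] at this

lemma LC.dL_nonneg (h : LC Q p) [Nonempty Ω] (k : ℕ) : 0 ≤ dL Q p k := by
  obtain ⟨x⟩ := ‹Nonempty Ω›
  have := h.dL_ge k x (g := fun _ => 0) (by simp) (by simp)
  simpa [Matrix.mulVec, dotProduct] using this

lemma LC.dC_nonneg (h : LC Q p) [Nonempty Ω] {l : ℝ} (hl : 0 ≤ l) : 0 ≤ dC Q p l := by
  obtain ⟨x⟩ := ‹Nonempty Ω›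
  have := h.dC_ge hl x (g := fun _ => 0) (by simp) (by simp)
  simpa using this

/-- Easy comparison. -/
lemma LC.easy (h : LC Q p) [Nonempty Ω] {l : ℝ} (hl : 0 ≤ l) {k : ℕ} (hk : (k : ℝ) < l) :
    dC Q p l ≤ dL Q p k + l / (l - k) ^ 2 := by
  refine h.dC_le hl fun x g g0 g1 => ?_
  have hpos : 0 < (l - k) ^ 2 := by have : 0 < l - k := by linarith
                                    positivity
  have s1 := (h.hasSum_hM_fun hl x g).sub ((hasSum_poi l).mul_right (∑ y, p y * g y))
  have s2 := ((hasSum_poi l).mul_right (dL Q p k)).add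
    ((hasSum_poi_var l).div_const ((l - k) ^ 2))
  rw [one_mul] at s1 s2
  refine hasSum_le (fun m => ?_) s1 s2
  have e1 : poi l m * ((Q ^ m) *ᵥ g) x - poi l m * ∑ y, p y * g y =
    poi l m * (((Q ^ m) *ᵥ g) x - ∑ y, p y * g y) := by ring
  have e2 : poi l m * dL Q p k + poi l m * ((m : ℝ) - l) ^ 2 / (l - k) ^ 2 =
    poi l m * (dL Q p k + ((m : ℝ) - l) ^ 2 / (l - k) ^ 2) := by ring
  rw [e1, e2]
  refine mul_le_mul_of_nonneg_left ?_ (poi_nonneg hl m)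
  rcases le_or_gt k m with hm | hm
  · have a := h.dL_ge m x g0 g1
    have b := h.dL_anti hm
    have : 0 ≤ ((m : ℝ) - l) ^ 2 / (l - k) ^ 2 := by positivity
    linarith
  · have a := (h.pow_mem m g0 g1).2 x
    have b := (h.mean_mem g0 g1).1
    have c := h.dL_nonneg k
    have : 1 ≤ ((m : ℝ) - l) ^ 2 / (l - k) ^ 2 := by
      rw [le_div_iff₀ hpos, one_mul]
      have : (m : ℝ) < k := by exact_mod_cast hm
      nlinarith
    linarith

lemma LC.center_pow (h : LC Q p) (m : ℕ) (g : Ω → ℝ) (c : ℝ) (x : Ω) :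
    ((Q ^ m) *ᵥ (fun y => g y - c)) x = ((Q ^ m) *ᵥ g) x - c := by
  simp only [Matrix.mulVec, dotProduct, mul_sub, Finset.sum_sub_distrib, ← Finset.sum_mul,
    h.pow_row, one_mul]

/-- The autocorrelation is controlled by the continuous-time distance. -/
lemma LC.ac_le (h : LC Q p) [Nonempty Ω] {l : ℝ} (hl : 2 ≤ l) {n : ℕ} (hn : 2 * l ≤ n) {g : Ω → ℝ}
    (g0 : ∀ x, 0 ≤ g x) (g1 : ∀ x, g x ≤ 1) :
    ac Q p (fun x => g x - ∑ y, p y * g y) n ≤ 2 * dC Q p l := by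
  have hl0 : 0 ≤ l := by linarith
  set c := ∑ y, p y * g y with hc
  obtain ⟨c0, c1⟩ := h.mean_mem g0 g1
  set f : Ω → ℝ := fun x => g x - c with hf
  have s1 : HasSum (fun m => poi l m * ac Q p f m)
      (∑ x, p x * (f x * (∑ y, hM Q l x y * f y))) := by
    have := hasSum_sum (s := Finset.univ)
      (fun x _ => (h.hasSum_hM_fun hl0 x f).mul_left (p x * f x))
    have e : (fun m => poi l m * ac Q p f m) =
        fun m => ∑ x, p x * f x * (poi l m * ((Q ^ m) *ᵥ f) x) := by
      funext m
      unfold ac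
      rw [Finset.mul_sum]
      refine Finset.sum_congr rfl fun x _ => by ring
    have e2 : ∑ x, p x * (f x * (∑ y, hM Q l x y * f y)) =
        ∑ x, p x * f x * (∑ y, hM Q l x y * f y) :=
      Finset.sum_congr rfl fun x _ => (mul_assoc _ _ _).symm
    rw [e, e2]; exact this
  have up : ∑ x, p x * (f x * (∑ y, hM Q l x y * f y)) ≤ dC Q p l := by
    have : ∀ x, p x * (f x * (∑ y, hM Q l x y * f y)) ≤ p x * dC Q p l := by
      intro x
      refine mul_le_mul_of_nonneg_left ?_ (h.pnonneg x)
      have e : ∑ y, hM Q l x y * f y = ∑ y, hM Q l x y * g y - c := by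
        simp only [hf, mul_sub, Finset.sum_sub_distrib, ← Finset.sum_mul, h.hM_row hl0, one_mul]
      have a1 := h.dC_ge hl0 x g0 g1
      have a2 := h.dC_ge hl0 x (g := fun y => 1 - g y) (fun y => by linarith [g1 y])
        (fun y => by linarith [g0 y])
      simp only [mul_sub, Finset.sum_sub_distrib, mul_one, h.hM_row hl0, h.psum] at a2
      have b : |∑ y, hM Q l x y * f y| ≤ dC Q p l := by
        rw [e, abs_le]; constructor <;> linarith
      have b2 : |f x| ≤ 1 := by
        rw [abs_le]; simp only [hf]; constructor <;> linarith [g0 x, g1 x]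
      calc _ ≤ |f x * ∑ y, hM Q l x y * f y| := le_abs_self _
        _ = |f x| * |∑ y, hM Q l x y * f y| := abs_mul _ _
        _ ≤ 1 * dC Q p l := mul_le_mul b2 b (abs_nonneg _) (by norm_num)
        _ = _ := one_mul _
    calc _ ≤ ∑ x, p x * dC Q p l := Finset.sum_le_sum fun x _ => this x
      _ = _ := by rw [← Finset.sum_mul, h.psum, one_mul]
  have s2 := ((hasSum_poi l).sub ((hasSum_poi_var l).div_const (l ^ 2))).mul_left (ac Q p f n)
  have lo : ac Q p f n * (1 - l / l ^ 2) ≤ ∑ x, p x * (f x * (∑ y, hM Q l x y * f y)) := by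
    refine hasSum_le (fun m => ?_) s2 s1
    have e : ac Q p f n * (poi l m - poi l m * ((m : ℝ) - l) ^ 2 / l ^ 2) =
      poi l m * (ac Q p f n * (1 - ((m : ℝ) - l) ^ 2 / l ^ 2)) := by ring
    rw [e]
    refine mul_le_mul_of_nonneg_left ?_ (poi_nonneg hl0 m)
    have an := h.ac_nonneg f n
    rcases le_or_gt m n with hm | hm
    · have := h.ac_anti f hm
      have q : 0 ≤ ((m : ℝ) - l) ^ 2 / l ^ 2 := by positivity
      nlinarith
    · have q : 1 ≤ ((m : ℝ) - l) ^ 2 / l ^ 2 := by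
        rw [le_div_iff₀ (by positivity), one_mul]
        have : (n : ℝ) < m := by exact_mod_cast hm
        nlinarith
      have := h.ac_nonneg f m
      nlinarith
  have : l / l ^ 2 ≤ 1 / 2 := by
    rw [div_le_div_iff₀ (by positivity) (by norm_num)]; nlinarith
  have an := h.ac_nonneg f n
  nlinarith

/-- Hard comparison. -/
lemma LC.hard (h : LC Q p) [Nonempty Ω] {l : ℝ} (hl : 0 ≤ l) {T : ℝ} (hT : 2 ≤ T) {J i r : ℕ} (hJ : 1 ≤ J)
    (hr : 2 * T ≤ ((2 ^ r * J : ℕ) : ℝ)) (hi : l < i) {β : ℝ} (hβ : 0 < β)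
    (hd : 2 * dC Q p T ≤ (β ^ 2) ^ (2 ^ r)) :
    dL Q p (J + i) ≤ dC Q p l + l / (i - l) ^ 2 + β * (2 + i / J) := by
  refine h.dL_le fun x g g0 g1 => ?_
  set c := ∑ y, p y * g y with hc
  obtain ⟨c0, c1⟩ := h.mean_mem g0 g1
  set f : Ω → ℝ := fun x => g x - c with hf
  have a0 : ac Q p f 0 ≤ 1 := by
    unfold ac
    rw [← h.psum]
    refine Finset.sum_le_sum fun x _ => ?_
    rw [pow_zero, Matrix.one_mulVec]
    have : f x * f x ≤ 1 := by
      have : |f x| ≤ 1 := by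
        rw [abs_le]; simp only [hf]; constructor <;> linarith [g0 x, g1 x]
      rw [← abs_mul_abs_self]; nlinarith [abs_nonneg (f x)]
    nlinarith [h.pnonneg x]
  have aJ : ac Q p f J ≤ β ^ 2 := by
    by_contra hcon
    push Not at hcon
    have h1 := pow_lt_pow_left₀ hcon (by positivity) (n := 2 ^ r) (by positivity)
    have h2 := h.ac_pow f a0 J r
    have h3 := h.ac_le hT hr g0 g1
    linarith
  obtain ⟨S, hS, hSm⟩ := h.maximal f (k := i) hJ hβ aJ
  -- truncated maximal function
  set S' : Ω → ℝ := fun y => min (S y) 1 with hS'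
  have S0 : ∀ y, 0 ≤ S y := fun y => (abs_nonneg _).trans (hS J le_rfl (by omega) y)
  have S'0 : ∀ y, 0 ≤ S' y := fun y => le_min (S0 y) zero_le_one
  have S'1 : ∀ y, S' y ≤ 1 := fun y => min_le_right _ _
  have hS2 : ∀ j, J ≤ j → j ≤ J + i → ∀ y, ((Q ^ j) *ᵥ f) y ≤ S' y := by
    intro j h1 h2 y
    refine le_min ((le_abs_self _).trans (hS j h1 h2 y)) ?_
    rw [hf, h.center_pow]
    have := (h.pow_mem j g0 g1).2 y
    linarith
  have s1 := (hasSum_poi l).mul_right (((Q ^ (J + i)) *ᵥ g) x - c)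
  have s2 := (h.hasSum_hM_fun hl x S').add ((hasSum_poi_var l).div_const ((i - l) ^ 2))
  rw [one_mul] at s1
  have hpos : 0 < (i - l) ^ 2 := by have : 0 < i - l := by linarith
                                    positivity
  have main : ((Q ^ (J + i)) *ᵥ g) x - c ≤ ∑ y, hM Q l x y * S' y + l / (i - l) ^ 2 := by
    refine hasSum_le (fun m => ?_) s1 s2
    have e2 : poi l m * ((Q ^ m) *ᵥ S') x + poi l m * ((m : ℝ) - l) ^ 2 / (i - l) ^ 2 =
      poi l m * (((Q ^ m) *ᵥ S') x + ((m : ℝ) - l) ^ 2 / (i - l) ^ 2) := by ring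
    rw [e2]
    refine mul_le_mul_of_nonneg_left ?_ (poi_nonneg hl m)
    rcases le_or_gt m i with hm | hm
    · obtain ⟨j, rfl⟩ := Nat.exists_eq_add_of_le hm
      have e : ((Q ^ (J + (m + j))) *ᵥ g) x - c = ((Q ^ m) *ᵥ ((Q ^ (J + j)) *ᵥ f)) x := by
        rw [Matrix.mulVec_mulVec, ← pow_add, hf, h.center_pow]
        rw [show m + (J + j) = J + (m + j) by ring]
      rw [e]
      have : ((Q ^ m) *ᵥ ((Q ^ (J + j)) *ᵥ f)) x ≤ ((Q ^ m) *ᵥ S') x :=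
        Finset.sum_le_sum fun y _ => mul_le_mul_of_nonneg_left
          (hS2 (J + j) (by omega) (by omega) y) (h.pow_nonneg m x y)
      have : 0 ≤ ((m : ℝ) - l) ^ 2 / (((m + j : ℕ) : ℝ) - l) ^ 2 := by positivity
      linarith
    · have a := (h.pow_mem (J + i) g0 g1).2 x
      have b := (h.pow_mem m S'0 S'1).1 x
      have : 1 ≤ ((m : ℝ) - l) ^ 2 / (i - l) ^ 2 := by
        rw [le_div_iff₀ hpos, one_mul]
        have : (i : ℝ) < m := by exact_mod_cast hm
        nlinarith
      linarith
  have u1 := h.dC_ge hl x S'0 S'1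
  have u2 : ∑ y, p y * S' y ≤ ∑ y, p y * S y :=
    Finset.sum_le_sum fun y _ => mul_le_mul_of_nonneg_left (min_le_left _ _) (h.pnonneg y)
  linarith

/-- Lower bounds from holding. -/
lemma LC.dL_hold (h : LC Q p) [Nonempty Ω] {ε : ℝ} (h0 : 1 - ε < dL Q p 0) (k : ℕ) :
    (1 / 2) ^ k - ε ≤ dL Q p k := by
  obtain ⟨x, hx⟩ := exists_lt_of_lt_ciSup h0
  have px : p x < ε := by
    by_contra hcon
    push Not at hcon
    have : tvDist ((Q ^ 0) x) p ≤ 1 - ε := by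
      refine tv_le (by rw [h.pow_row, h.psum]) fun g g0 g1 => ?_
      have e : ∑ y, (Q ^ 0) x y * g y = g x := by simp [Matrix.one_apply]
      have : p x * g x ≤ ∑ y, p y * g y :=
        Finset.single_le_sum (f := fun y => p y * g y)
          (fun y _ => mul_nonneg (h.pnonneg y) (g0 y)) (Finset.mem_univ x)
      rw [e]
      have p1 : p x ≤ 1 := by
        rw [← h.psum]
        exact Finset.single_le_sum (f := p) (fun y _ => h.pnonneg y) (Finset.mem_univ x)
      nlinarith [g0 x, g1 x]
    linarith
  have := h.dL_ge k x (g := fun y => if y = x then 1 else 0)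
    (fun y => by split_ifs <;> norm_num) (fun y => by split_ifs <;> norm_num)
  have e : ((Q ^ k) *ᵥ (fun y => if y = x then (1 : ℝ) else 0)) x = (Q ^ k) x x := by
    simp [Matrix.mulVec, dotProduct]
  have e2 : ∑ y, p y * (if y = x then (1 : ℝ) else 0) = p x := by simp
  rw [e, e2] at this
  have := h.pow_diag k x
  linarith

lemma LC.dC_hold (h : LC Q p) [Nonempty Ω] {ε : ℝ} (h0 : 1 - ε < dL Q p 0) {l : ℝ} (hl : 0 ≤ l) :
    Real.exp (-l) - ε ≤ dC Q p l := by
  obtain ⟨x, hx⟩ := exists_lt_of_lt_ciSup h0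
  have px : p x < ε := by
    by_contra hcon
    push Not at hcon
    have : tvDist ((Q ^ 0) x) p ≤ 1 - ε := by
      refine tv_le (by rw [h.pow_row, h.psum]) fun g g0 g1 => ?_
      have e : ∑ y, (Q ^ 0) x y * g y = g x := by simp [Matrix.one_apply]
      have : p x * g x ≤ ∑ y, p y * g y :=
        Finset.single_le_sum (f := fun y => p y * g y)
          (fun y _ => mul_nonneg (h.pnonneg y) (g0 y)) (Finset.mem_univ x)
      rw [e]
      have p1 : p x ≤ 1 := by
        rw [← h.psum]
        exact Finset.single_le_sum (f := p) (fun y _ => h.pnonneg y) (Finset.mem_univ x)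
      nlinarith [g0 x, g1 x]
    linarith
  have := h.dC_ge hl x (g := fun y => if y = x then 1 else 0)
    (fun y => by split_ifs <;> norm_num) (fun y => by split_ifs <;> norm_num)
  have e : ∑ y, hM Q l x y * (if y = x then (1 : ℝ) else 0) = hM Q l x x := by simp
  have e2 : ∑ y, p y * (if y = x then (1 : ℝ) else 0) = p x := by simp
  rw [e, e2] at this
  have := le_hasSum (h.hasSum_hM hl x x) 0
    (fun m _ => mul_nonneg (poi_nonneg hl m) (h.pow_nonneg m x x))
  have e3 : poi l 0 * (Q ^ 0) x x = Real.exp (-l) := by simp [poi]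
  linarith

lemma LC.dC_zero (h : LC Q p) : dC Q p 0 = dL Q p 0 := by
  unfold dC dL
  have : ∀ x, hM Q 0 x = (Q ^ 0) x := by
    intro x
    funext y
    unfold hM
    rw [tsum_eq_single 0]
    · simp [poi]
    · intro m hm; simp [poi, hm]
  simp only [this]

end dist

set_option maxHeartbeats 1000000 in
lemma u_hard {δ η K : ℝ} (hδ : 0 < δ) (hδ1 : δ < 1) (hη : 0 < η) (hK : 0 < K) :
    ∃ ε0 : ℝ, 0 < ε0 ∧ ∃ L0 : ℝ, ∀ (Ω : Type) [Fintype Ω] [DecidableEq Ω] [Nonempty Ω]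
      (Q : Matrix Ω Ω ℝ) (p : Ω → ℝ), LC Q p → ∀ L : ℝ, L0 ≤ L → ∀ l : ℝ, 0 ≤ l → l ≤ L →
      ∀ T : ℝ, 2 ≤ T → T ≤ K * L → dC Q p T ≤ ε0 → ∀ k : ℕ, (1 + δ) * L ≤ k →
      dL Q p k ≤ dC Q p l + η := by
  obtain ⟨r, hr⟩ := pow_unbounded_of_one_lt (16 * K / δ) (one_lt_two : (1 : ℝ) < 2)
  set β : ℝ := (η / 2) / (2 + 24 / δ) with hβ
  have hβ0 : 0 < β := by positivity
  refine ⟨(β ^ 2) ^ (2 ^ r) / 2, by positivity, max (8 / δ) (32 / (δ ^ 2 * η)), ?_⟩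
  intro Ω _ _ _ Q p h L hL l hl hlL T hT hTK hd k hk
  have hL1 : 8 ≤ δ * L := by
    have := (le_max_left _ _).trans hL
    rw [div_le_iff₀ hδ] at this; linarith
  have hL2 : 32 ≤ L * (δ ^ 2 * η) := by
    have := (le_max_right _ _).trans hL
    rwa [div_le_iff₀ (by positivity)] at this
  have hL0 : 0 < L := by
    by_contra hcon
    push Not at hcon
    nlinarith
  have hL8 : 8 ≤ L := by nlinarith
  set J := ⌊δ * L / 4⌋₊ with hJ
  set i := ⌈(1 + δ / 4) * L⌉₊ with hi
  have J1 : (J : ℝ) ≤ δ * L / 4 := Nat.floor_le (by positivity)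
  have J2 : δ * L / 8 ≤ J := by
    have := Nat.lt_floor_add_one (δ * L / 4)
    rw [← hJ] at this
    linarith
  have i1 : (1 + δ / 4) * L ≤ i := Nat.le_ceil _
  have i2 : (i : ℝ) < (1 + δ / 4) * L + 1 := Nat.ceil_lt_add_one (by positivity)
  have Jpos : (1 : ℝ) ≤ J := by linarith
  have Jnat : 1 ≤ J := by exact_mod_cast Jpos
  have hJi : J + i ≤ k := by
    have : ((J + i : ℕ) : ℝ) ≤ k := by push_cast; nlinarith
    exact_mod_cast this
  have hrJ : 2 * T ≤ ((2 ^ r * J : ℕ) : ℝ) := by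
    push_cast
    calc 2 * T ≤ 2 * (K * L) := by linarith
      _ = (16 * K / δ) * (δ * L / 8) := by field_simp; ring
      _ ≤ 2 ^ r * J := mul_le_mul hr.le J2 (by positivity) (by positivity)
  have hli : l < i := by nlinarith
  have main := h.hard hl hT Jnat hrJ hli hβ0 (by linarith)
  have b1 : l / (i - l) ^ 2 ≤ η / 2 := by
    have g : δ * L / 4 ≤ i - l := by nlinarith
    have g2 : (δ * L / 4) ^ 2 ≤ (i - l) ^ 2 := pow_le_pow_left₀ (by positivity) g 2
    rw [div_le_iff₀ (by nlinarith)]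
    have : L ≤ η / 2 * (δ * L / 4) ^ 2 := by nlinarith
    nlinarith
  have b2 : β * (2 + i / J) ≤ η / 2 := by
    have : (i : ℝ) / J ≤ 24 / δ := by
      rw [div_le_div_iff₀ (by linarith) hδ]
      have e1 : (i : ℝ) ≤ 3 * L := by
        have : (1 + δ / 4) * L ≤ 2 * L := mul_le_mul_of_nonneg_right (by linarith) hL0.le
        linarith
      have e2 := mul_le_mul_of_nonneg_right e1 hδ.le
      linarith
    calc β * (2 + i / J) ≤ β * (2 + 24 / δ) := mul_le_mul_of_nonneg_left (by linarith) hβ0.le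
      _ = η / 2 := by rw [hβ]; field_simp
  have := h.dL_anti hJi
  linarith

lemma u_easy {δ η : ℝ} (hδ : 0 < δ) (hη : 0 < η) :
    ∃ L0 : ℝ, ∀ (Ω : Type) [Fintype Ω] [DecidableEq Ω] [Nonempty Ω]
      (Q : Matrix Ω Ω ℝ) (p : Ω → ℝ), LC Q p → ∀ L : ℝ, L0 ≤ L →
      ∀ k : ℕ, k ≤ (1 - δ) * L → dC Q p L ≤ dL Q p k + η := by
  refine ⟨1 / (δ ^ 2 * η), ?_⟩
  intro Ω _ _ _ Q p h L hL k hk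
  have hL0 : 0 < L := lt_of_lt_of_le (by positivity) hL
  have hL2 : 1 ≤ L * (δ ^ 2 * η) := by
    rwa [div_le_iff₀ (by positivity)] at hL
  have hkL : (k : ℝ) < L := by nlinarith
  have := h.easy hL0.le hkL
  have b : L / (L - k) ^ 2 ≤ η := by
    have g : δ * L ≤ L - k := by linarith
    have g2 : (δ * L) ^ 2 ≤ (L - k) ^ 2 := pow_le_pow_left₀ (by positivity) g 2
    have : 0 < (δ * L) ^ 2 := by positivity
    rw [div_le_iff₀ (by linarith)]
    nlinarith
  linarith

lemma pos_of_cutoff {F : ℕ → ℝ → ℝ} (F0 : ∀ n ε, 0 ≤ F n ε)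
    (hc : ∀ ε : ℝ, 0 < ε → ε < 1 → Tendsto (fun n => F n ε / F n (1 - ε)) atTop (nhds 1))
    {ε : ℝ} (h0 : 0 < ε) (h1 : ε < 1) : ∀ᶠ n in atTop, 0 < F n ε := by
  filter_upwards [(hc ε h0 h1).eventually (lt_mem_nhds (show (0 : ℝ) < 1 by norm_num))] with n hn
  rcases (F0 n ε).lt_or_eq with h | h
  · exact h
  · rw [← h] at hn; simp at hn

lemma half_of_cutoff {F : ℕ → ℝ → ℝ} (F0 : ∀ n ε, 0 ≤ F n ε)
    (Fm : ∀ n ε ε', 0 < F n ε → ε ≤ ε' → F n ε' ≤ F n ε)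
    (hc : ∀ ε : ℝ, 0 < ε → ε < 1 → Tendsto (fun n => F n ε / F n (1 - ε)) atTop (nhds 1))
    {ε : ℝ} (h0 : 0 < ε) (h1 : ε < 1) :
    Tendsto (fun n => F n ε / F n (1 / 2)) atTop (nhds 1) := by
  have p1 := pos_of_cutoff F0 hc h0 h1
  have p2 := pos_of_cutoff F0 hc (ε := 1 - ε) (by linarith) (by linarith)
  have p3 := pos_of_cutoff F0 hc (ε := 1 / 2) (by norm_num) (by norm_num)
  rcases le_total ε (1 / 2) with hε | hε
  · refine tendsto_of_tendsto_of_tendsto_of_le_of_le' tendsto_const_nhds (hc ε h0 h1) ?_ ?_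
    · filter_upwards [p1, p3] with n a b
      rw [le_div_iff₀ b, one_mul]
      exact Fm n _ _ a hε
    · filter_upwards [p1, p2, p3] with n a b c
      exact div_le_div_of_nonneg_left a.le b (Fm n _ _ c (by linarith))
  · refine tendsto_of_tendsto_of_tendsto_of_le_of_le' (hc ε h0 h1) tendsto_const_nhds ?_ ?_
    · filter_upwards [p1, p2, p3] with n a b c
      exact div_le_div_of_nonneg_left a.le c (Fm n _ _ b (by linarith))
    · filter_upwards [p1, p3] with n a b
      rw [div_le_iff₀ b, one_mul]
      exact Fm n _ _ b hε

lemma cutoff_of_ratio {F : ℕ → ℝ → ℝ} {τ : ℕ → ℝ}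
    (hc : ∀ ε : ℝ, 0 < ε → ε < 1 → Tendsto (fun n => F n ε / τ n) atTop (nhds 1))
    {ε : ℝ} (h0 : 0 < ε) (h1 : ε < 1) :
    Tendsto (fun n => F n ε / F n (1 - ε)) atTop (nhds 1) := by
  have a := hc ε h0 h1
  have b := hc (1 - ε) (by linarith) (by linarith)
  have := a.div b one_ne_zero
  rw [div_one] at this
  refine this.congr' ?_
  filter_upwards [a.eventually (lt_mem_nhds (show (0 : ℝ) < 1 by norm_num))] with n hn
  have : τ n ≠ 0 := by intro h; rw [h] at hn; simp at hn
  simp only [Pi.div_apply]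
  exact div_div_div_cancel_right₀ this _ _

lemma ratio_of_bounds {G τ : ℕ → ℝ} (hτ : ∀ᶠ n in atTop, 0 < τ n)
    (hb : ∀ δ : ℝ, 0 < δ → δ < 1 → ∀ᶠ n in atTop, (1 - δ) * τ n ≤ G n ∧ G n ≤ (1 + δ) * τ n) :
    Tendsto (fun n => G n / τ n) atTop (nhds 1) := by
  rw [Metric.tendsto_nhds]
  intro e he
  have hm : 0 < min (e / 2) (1 / 2) := by positivity
  have hm2 : min (e / 2) (1 / 2) < 1 := (min_le_right _ _).trans_lt (by norm_num)
  filter_upwards [hτ, hb _ hm hm2] with n hn ⟨h1, h2⟩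
  have : min (e / 2) (1 / 2) ≤ e / 2 := min_le_left _ _
  rw [Real.dist_eq]
  have a1 : 1 - min (e / 2) (1 / 2) ≤ G n / τ n := by rwa [le_div_iff₀ hn]
  have a2 : G n / τ n ≤ 1 + min (e / 2) (1 / 2) := by rwa [div_le_iff₀ hn]
  rw [abs_lt]; constructor <;> linarith

lemma bounds_of_ratio {G τ : ℕ → ℝ} (hτ : ∀ᶠ n in atTop, 0 < τ n)
    (h : Tendsto (fun n => G n / τ n) atTop (nhds 1)) {δ : ℝ} (hδ : 0 < δ) :
    ∀ᶠ n in atTop, (1 - δ) * τ n < G n ∧ G n < (1 + δ) * τ n := by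
  filter_upwards [hτ, h.eventually (lt_mem_nhds (show 1 - δ < 1 by linarith)),
    h.eventually (gt_mem_nhds (show 1 < 1 + δ by linarith))] with n hn h1 h2
  exact ⟨by rwa [lt_div_iff₀ hn] at h1, by rwa [div_lt_iff₀ hn] at h2⟩

lemma atTop_of_levels {F : ℕ → ℝ → ℝ}
    (p3 : ∀ᶠ n in atTop, 0 < F n (1 / 2))
    (hc : ∀ ε : ℝ, 0 < ε → ε < 1 → Tendsto (fun n => F n ε / F n (1 / 2)) atTop (nhds 1))
    (hB : ∀ B : ℕ, ∃ ε : ℝ, 0 < ε ∧ ε < 1 ∧ ∀ᶠ n in atTop, (B : ℝ) ≤ F n ε) :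
    Tendsto (fun n => F n (1 / 2)) atTop atTop := by
  rw [tendsto_atTop]
  intro b
  obtain ⟨B, hBb⟩ := exists_nat_ge (2 * b)
  obtain ⟨ε, h0, h1, hε⟩ := hB B
  filter_upwards [hε, bounds_of_ratio p3 (hc ε h0 h1) one_pos] with n a ⟨_, c⟩
  linarith

section seq

variable {Ω : ℕ → Type} [∀ n, Fintype (Ω n)] [∀ n, DecidableEq (Ω n)] [∀ n, Nonempty (Ω n)]
  {P : ∀ n, Matrix (Ω n) (Ω n) ℝ} {q : ∀ n, Ω n → ℝ} (hP : ∀ n, IsRevMC (P n) (q n))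

lemma contMix_nonneg {α : Type*} [Fintype α] [DecidableEq α] (P : Matrix α α ℝ) (p : α → ℝ)
    (ε : ℝ) : 0 ≤ contMix P p ε := Real.sInf_nonneg fun _ h => h.1

lemma contSet_bdd {α : Type*} [Fintype α] [DecidableEq α] (P : Matrix α α ℝ) (p : α → ℝ)
    (ε : ℝ) : BddBelow {t : ℝ | 0 ≤ t ∧ contDistMax P p t ≤ ε} := ⟨0, fun _ h => h.1⟩

lemma contMix_ne {α : Type*} [Fintype α] [DecidableEq α] {P : Matrix α α ℝ} {p : α → ℝ}
    {ε : ℝ} (h : 0 < contMix P p ε) : {t : ℝ | 0 ≤ t ∧ contDistMax P p t ≤ ε}.Nonempty := by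
  by_contra hcon
  rw [Set.not_nonempty_iff_eq_empty] at hcon
  rw [contMix, hcon, Real.sInf_empty] at h
  exact lt_irrefl _ h

lemma contMix_le {α : Type*} [Fintype α] [DecidableEq α] {P : Matrix α α ℝ} {p : α → ℝ}
    {ε t : ℝ} (h0 : 0 ≤ t) (h : dC (lazyM P) p (2 * t) ≤ ε) : contMix P p ε ≤ t :=
  csInf_le (contSet_bdd P p ε) ⟨h0, by rwa [contDistMax_eq]⟩

lemma contMix_mono {α : Type*} [Fintype α] [DecidableEq α] {P : Matrix α α ℝ} {p : α → ℝ}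
    {ε ε' : ℝ} (h : 0 < contMix P p ε) (he : ε ≤ ε') : contMix P p ε' ≤ contMix P p ε :=
  csInf_le_csInf (contSet_bdd P p ε') (contMix_ne h) fun _ ht => ⟨ht.1, ht.2.trans he⟩

lemma lazyMix_mem {α : Type*} [Fintype α] [DecidableEq α] {P : Matrix α α ℝ} {p : α → ℝ}
    {ε : ℝ} (h : 0 < lazyMix P p ε) : dL (lazyM P) p (lazyMix P p ε) ≤ ε := by
  have := Nat.sInf_mem (Nat.nonempty_of_pos_sInf h)
  rw [← lazyDistMax_eq]
  exact this

lemma lazyMix_le {α : Type*} [Fintype α] [DecidableEq α] {P : Matrix α α ℝ} {p : α → ℝ}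
    {ε : ℝ} {k : ℕ} (h : dL (lazyM P) p k ≤ ε) : lazyMix P p ε ≤ k :=
  Nat.sInf_le (show lazyDistMax P p (k : ℝ) ≤ ε by rwa [lazyDistMax_eq])

lemma lazyMix_mem' {α : Type*} [Fintype α] [DecidableEq α] {P : Matrix α α ℝ} {p : α → ℝ}
    {ε : ℝ} {k : ℕ} (h : dL (lazyM P) p k ≤ ε) : dL (lazyM P) p (lazyMix P p ε) ≤ ε := by
  have := Nat.sInf_mem (s := {t : ℕ | lazyDistMax P p t ≤ ε})
    ⟨k, show lazyDistMax P p (k : ℝ) ≤ ε by rwa [lazyDistMax_eq]⟩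
  rw [← lazyDistMax_eq]
  exact this

lemma lazyMix_mono {α : Type*} [Fintype α] [DecidableEq α] {P : Matrix α α ℝ} {p : α → ℝ}
    {ε ε' : ℝ} (h : 0 < lazyMix P p ε) (he : ε ≤ ε') : lazyMix P p ε' ≤ lazyMix P p ε :=
  lazyMix_le ((lazyMix_mem h).trans he)


theorem cont_to_lazy (hP : ∀ n, IsRevMC (P n) (q n)) (hc : ContCutoff P q) : LazyCutoff P q := by
  have lc : ∀ n, LC (lazyM (P n)) (q n) := fun n => lc_of_rev (hP n)
  set F : ℕ → ℝ → ℝ := fun n ε => contMix (P n) (q n) ε with hF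
  have F0 : ∀ n ε, 0 ≤ F n ε := fun n ε => contMix_nonneg _ _ _
  have Fm : ∀ n ε ε', 0 < F n ε → ε ≤ ε' → F n ε' ≤ F n ε := fun n ε ε' h he => contMix_mono h he
  have Fp : ∀ ε : ℝ, 0 < ε → ε < 1 → ∀ᶠ n in atTop, 0 < F n ε :=
    fun ε h0 h1 => pos_of_cutoff F0 hc h0 h1
  have Fr : ∀ ε : ℝ, 0 < ε → ε < 1 → Tendsto (fun n => F n ε / F n (1 / 2)) atTop (nhds 1) :=
    fun ε h0 h1 => half_of_cutoff F0 Fm hc h0 h1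
  have hτp := Fp (1 / 2) (by norm_num) (by norm_num)
  have hτ : Tendsto (fun n => F n (1 / 2)) atTop atTop := by
    refine atTop_of_levels hτp Fr fun B => ?_
    set ε : ℝ := Real.exp (-(2 * B)) / 3 with hε
    have e0 : 0 < ε := by positivity
    have e1 : ε < 1 := by
      have : Real.exp (-(2 * (B : ℝ))) ≤ 1 := Real.exp_le_one_iff.2 (by simp)
      linarith
    refine ⟨ε, e0, e1, ?_⟩
    filter_upwards [Fp ε e0 e1, Fp (1 - ε) (by linarith) (by linarith)] with n a b
    have d0 : 1 - ε < dL (lazyM (P n)) (q n) 0 := by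
      rw [← (lc n).dC_zero]
      by_contra hcon
      push Not at hcon
      have := contMix_le (P := P n) (p := q n) (t := 0) le_rfl (by simpa using hcon)
      exact absurd b (not_lt.2 this)
    refine le_csInf (contMix_ne a) fun t ht => ?_
    by_contra hcon
    push Not at hcon
    have h1 := (lc n).dC_hold d0 (l := 2 * t) (by linarith [ht.1])
    have h2 := ht.2
    rw [contDistMax_eq] at h2
    have h3 : Real.exp (-(2 * B)) < Real.exp (-(2 * t)) := Real.exp_lt_exp.2 (by linarith)
    linarith
  set τ : ℕ → ℝ := fun n => F n (1 / 2) with hτdef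
  intro ε h0 h1
  refine cutoff_of_ratio (F := fun n ε => (lazyMix (P n) (q n) ε : ℝ)) (τ := fun n => 2 * τ n)
    ?_ h0 h1
  clear h0 h1 ε
  intro ε h0 h1
  refine ratio_of_bounds (by filter_upwards [hτp] with n hn; simpa [hτdef] using hn) ?_
  intro δ hδ hδ1
  obtain ⟨ε0, hε0, L0, HU⟩ := u_hard (δ := δ / 8) (η := ε / 2) (K := 1) (by linarith) (by linarith)
    (by linarith) one_pos
  obtain ⟨L1, HE⟩ := u_easy (δ := δ / 8) (η := (1 - ε) / 4) (by linarith) (by linarith)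
  set ε1 := min (ε / 2) ε0 with hε1
  have e10 : 0 < ε1 := by positivity
  have e11 : ε1 ≤ ε / 2 := min_le_left _ _
  filter_upwards [hτp, hτ.eventually_ge_atTop (max L0 L1), hτ.eventually_ge_atTop (2 / δ),
    hτ.eventually_ge_atTop 2, Fp ε1 e10 (by linarith),
    bounds_of_ratio hτp (Fr ε1 e10 (by linarith)) (show 0 < δ / 8 by linarith),
    bounds_of_ratio hτp (Fr ((1 + ε) / 2) (by linarith) (by linarith)) (show 0 < δ / 8 by linarith)]
    with n hn hL hbig hbig2 hp ⟨b1, b2⟩ ⟨b3, b4⟩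
  change 0 < τ n at hn
  change (1 - δ / 8) * τ n < F n ε1 at b1
  change F n ε1 < (1 + δ / 8) * τ n at b2
  change (1 - δ / 8) * τ n < F n ((1 + ε) / 2) at b3
  have hL0 : L0 ≤ τ n := (le_max_left _ _).trans hL
  have hL1 : L1 ≤ τ n := (le_max_right _ _).trans hL
  rw [div_le_iff₀ hδ] at hbig
  -- upper bound
  obtain ⟨t, ⟨ht0, ht1⟩, ht2⟩ := exists_lt_of_csInf_lt (contMix_ne hp) b2
  have ht3 : F n ε1 ≤ t := csInf_le (contSet_bdd _ _ _) ⟨ht0, ht1⟩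
  rw [contDistMax_eq] at ht1
  set L : ℝ := 2 * (1 + δ / 8) * τ n with hLdef
  have ht4 : 2 ≤ 2 * t := by nlinarith
  have U := HU (Ω n) _ _ (lc n) L (by nlinarith) (2 * t) (by linarith) (by linarith) (2 * t) ht4
    (by linarith) (ht1.trans (min_le_right _ _)) ⌈(1 + δ / 8) * L⌉₊ (Nat.le_ceil _)
  have U' : dL (lazyM (P n)) (q n) ⌈(1 + δ / 8) * L⌉₊ ≤ ε := by linarith
  have up : (lazyMix (P n) (q n) ε : ℝ) ≤ (⌈(1 + δ / 8) * L⌉₊ : ℝ) := by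
    exact_mod_cast lazyMix_le U'
  have hceil : ((⌈(1 + δ / 8) * L⌉₊ : ℕ) : ℝ) < (1 + δ / 8) * L + 1 :=
    Nat.ceil_lt_add_one (by positivity)
  refine ⟨?_, ?_⟩
  · set M : ℝ := 2 * ((1 - δ / 8) * τ n) with hM
    have M0 : 0 ≤ M := by
      have : 0 ≤ 1 - δ / 8 := by linarith
      positivity
    have c1 : (1 + ε) / 2 < dC (lazyM (P n)) (q n) M := by
      by_contra hcon
      push Not at hcon
      have := contMix_le (P := P n) (p := q n) (t := (1 - δ / 8) * τ n) (by linarith) hcon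
      exact absurd b3 (not_lt.2 this)
    have E := HE (Ω n) _ _ (lc n) M (by nlinarith) ⌊(1 - δ / 8) * M⌋₊
      (Nat.floor_le (by nlinarith))
    have c2 : ⌊(1 - δ / 8) * M⌋₊ + 1 ≤ lazyMix (P n) (q n) ε := by
      by_contra hcon
      have hle : lazyMix (P n) (q n) ε ≤ ⌊(1 - δ / 8) * M⌋₊ := by omega
      have d1 := (lc n).dL_anti hle
      have d2 := lazyMix_mem' U'
      linarith
    have c3 : ((⌊(1 - δ / 8) * M⌋₊ + 1 : ℕ) : ℝ) ≤ lazyMix (P n) (q n) ε := by exact_mod_cast c2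
    have c4 := Nat.lt_floor_add_one ((1 - δ / 8) * M)
    push_cast at c3
    have c5 : (1 - δ) * (2 * τ n) ≤ (1 - δ / 8) * M := by
      rw [hM]; nlinarith [mul_pos hδ hn, mul_pos (mul_pos hδ hδ) hn]
    linarith
  · have c5 : (1 + δ / 8) * L + 1 ≤ (1 + δ) * (2 * τ n) := by
      rw [hLdef]
      have : δ * δ * τ n ≤ δ * τ n := by nlinarith [mul_pos hδ hn]
      nlinarith
    linarith

theorem lazy_to_cont (hP : ∀ n, IsRevMC (P n) (q n)) (hc : LazyCutoff P q) : ContCutoff P q := by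
  have lc : ∀ n, LC (lazyM (P n)) (q n) := fun n => lc_of_rev (hP n)
  set F : ℕ → ℝ → ℝ := fun n ε => (lazyMix (P n) (q n) ε : ℝ) with hF
  have F0 : ∀ n ε, 0 ≤ F n ε := fun n ε => Nat.cast_nonneg _
  have Fm : ∀ n ε ε', 0 < F n ε → ε ≤ ε' → F n ε' ≤ F n ε := fun n ε ε' h he => by
    have h' : 0 < lazyMix (P n) (q n) ε := Nat.cast_pos.mp (show (0 : ℝ) < (lazyMix (P n) (q n) ε : ℝ) from h)
    simp only [hF]
    exact_mod_cast lazyMix_mono h' he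
  have Fp : ∀ ε : ℝ, 0 < ε → ε < 1 → ∀ᶠ n in atTop, 0 < F n ε :=
    fun ε h0 h1 => pos_of_cutoff F0 hc h0 h1
  have Fr : ∀ ε : ℝ, 0 < ε → ε < 1 → Tendsto (fun n => F n ε / F n (1 / 2)) atTop (nhds 1) :=
    fun ε h0 h1 => half_of_cutoff F0 Fm hc h0 h1
  have hτp := Fp (1 / 2) (by norm_num) (by norm_num)
  have hτ : Tendsto (fun n => F n (1 / 2)) atTop atTop := by
    refine atTop_of_levels hτp Fr fun B => ?_
    set ε : ℝ := (1 / 2 : ℝ) ^ B / 3 with hε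
    have e0 : 0 < ε := by positivity
    have e1 : ε < 1 := by
      have : (1 / 2 : ℝ) ^ B ≤ 1 := pow_le_one₀ (by norm_num) (by norm_num)
      linarith
    refine ⟨ε, e0, e1, ?_⟩
    filter_upwards [Fp ε e0 e1, Fp (1 - ε) (by linarith) (by linarith)] with n a b
    have a' : 0 < lazyMix (P n) (q n) ε := Nat.cast_pos.mp (show (0 : ℝ) < (lazyMix (P n) (q n) ε : ℝ) from a)
    have b' : 0 < lazyMix (P n) (q n) (1 - ε) := Nat.cast_pos.mp (show (0 : ℝ) < (lazyMix (P n) (q n) (1 - ε) : ℝ) from b)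
    have d0 : 1 - ε < dL (lazyM (P n)) (q n) 0 := by
      by_contra hcon
      push Not at hcon
      have := lazyMix_le (P := P n) (p := q n) hcon
      omega
    have : B ≤ lazyMix (P n) (q n) ε := by
      by_contra hcon
      push Not at hcon
      have h1 := (lc n).dL_hold d0 B
      have h2 := lazyMix_mem a'
      have h3 := (lc n).dL_anti hcon.le
      linarith
    simp only [hF]
    exact_mod_cast this
  set τ : ℕ → ℝ := fun n => F n (1 / 2) with hτdef
  -- upper estimate
  have upper : ∀ ε : ℝ, 0 < ε → ε < 1 → ∀ δ : ℝ, 0 < δ → δ ≤ 1 →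
      ∀ᶠ n in atTop, dC (lazyM (P n)) (q n) ((1 + δ) * τ n) ≤ ε := by
    intro ε h0 h1 δ hδ hδ1
    obtain ⟨L1, HE⟩ := u_easy (δ := δ / 8) (η := ε / 2) (by linarith) (by linarith)
    filter_upwards [hτp, hτ.eventually_ge_atTop L1, Fp (ε / 2) (by linarith) (by linarith),
      bounds_of_ratio hτp (Fr (ε / 2) (by linarith) (by linarith)) (show 0 < δ / 8 by linarith)]
      with n hn hL hp ⟨_, b2⟩
    change 0 < τ n at hn
    change F n (ε / 2) < (1 + δ / 8) * τ n at b2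
    have hp' : 0 < lazyMix (P n) (q n) (ε / 2) := Nat.cast_pos.mp (show (0 : ℝ) < (lazyMix (P n) (q n) (ε / 2) : ℝ) from hp)
    have E := HE (Ω n) _ _ (lc n) ((1 + δ) * τ n) (by nlinarith) (lazyMix (P n) (q n) (ε / 2))
      (by
        refine b2.le.trans ?_
        rw [← mul_assoc]
        refine mul_le_mul_of_nonneg_right ?_ hn.le
        nlinarith)
    have := lazyMix_mem hp'
    linarith
  intro ε h0 h1
  refine cutoff_of_ratio (F := fun n ε => contMix (P n) (q n) ε) (τ := fun n => τ n / 2)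
    ?_ h0 h1
  clear h0 h1 ε
  intro ε h0 h1
  refine ratio_of_bounds (by
    filter_upwards [hτp] with n hn
    change 0 < τ n at hn
    linarith) ?_
  intro δ hδ hδ1
  have hδ' : 0 < 1 - δ := by linarith
  obtain ⟨ε0, hε0, L0, HU⟩ := u_hard (δ := δ / 8) (η := (1 - ε) / 4) (K := 2 / (1 - δ))
    (by linarith) (by linarith) (by linarith) (by positivity)
  have m0 : 0 < min ε0 (1 / 2) := by positivity
  have m1 : min ε0 (1 / 2) < 1 := (min_le_right _ _).trans_lt (by norm_num)
  filter_upwards [hτp, hτ.eventually_ge_atTop (L0 / (1 - δ)), hτ.eventually_ge_atTop (8 / δ),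
    hτ.eventually_ge_atTop 2, upper ε h0 h1 δ hδ hδ1.le, upper _ m0 m1 1 one_pos le_rfl,
    bounds_of_ratio hτp (Fr ((1 + ε) / 2) (by linarith) (by linarith)) (show 0 < δ / 2 by linarith)]
    with n hn hL hbig hbig2 hup hsm ⟨b3, _⟩
  change 0 < τ n at hn
  change (1 - δ / 2) * τ n < F n ((1 + ε) / 2) at b3
  rw [div_le_iff₀ hδ] at hbig
  rw [div_le_iff₀ hδ'] at hL
  change L0 ≤ τ n * (1 - δ) at hL
  change 8 ≤ τ n * δ at hbig
  have e2 : 2 * ((1 + δ) * (τ n / 2)) = (1 + δ) * τ n := by ring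
  have hmem : dC (lazyM (P n)) (q n) (2 * ((1 + δ) * (τ n / 2))) ≤ ε := by rwa [e2]
  have hpos : 0 ≤ (1 + δ) * (τ n / 2) := by positivity
  refine ⟨?_, contMix_le hpos hmem⟩
  refine le_csInf ⟨_, hpos, by rwa [contDistMax_eq]⟩ fun t ht => ?_
  by_contra hcon
  push Not at hcon
  obtain ⟨ht0, ht1⟩ := ht
  rw [contDistMax_eq] at ht1
  set L : ℝ := τ n * (1 - δ) with hLdef
  have hK : (1 + 1) * τ n ≤ 2 / (1 - δ) * L := by
    rw [hLdef]; apply le_of_eq; field_simp; norm_num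
  have L0' : 0 ≤ L := by positivity
  have U := HU (Ω n) _ _ (lc n) L hL (2 * t) (by linarith) (by rw [hLdef]; linarith)
    ((1 + 1) * τ n) (by nlinarith) hK (hsm.trans (min_le_left _ _)) ⌈(1 + δ / 8) * L⌉₊
    (Nat.le_ceil _)
  have hceil : ((⌈(1 + δ / 8) * L⌉₊ : ℕ) : ℝ) < (1 + δ / 8) * L + 1 :=
    Nat.ceil_lt_add_one (by positivity)
  have U' : dL (lazyM (P n)) (q n) ⌈(1 + δ / 8) * L⌉₊ ≤ (1 + ε) / 2 := by linarith
  have up : F n ((1 + ε) / 2) ≤ (⌈(1 + δ / 8) * L⌉₊ : ℝ) := by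
    simp only [hF]
    exact_mod_cast lazyMix_le U'
  have c5 : (1 + δ / 8) * L + 1 ≤ (1 - δ / 2) * τ n := by
    rw [hLdef]
    nlinarith [mul_pos hδ hn, mul_pos (mul_pos hδ hδ) hn]
  linarith

end seq

end LazyAux

/-- **Corollary 1.5 of Hermon–Peres, (i) ↔ (ii).**
A sequence of finite irreducible reversible Markov chains exhibits a continuous-time cutoff
iff it exhibits a lazy cutoff. -/
theorem contCutoff_iff_lazyCutoff :
    ∀ (Ω : ℕ → Type) [∀ n, Fintype (Ω n)] [∀ n, DecidableEq (Ω n)] [∀ n, Nonempty (Ω n)]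
      (P : ∀ n, Matrix (Ω n) (Ω n) ℝ) (pi : ∀ n, Ω n → ℝ),
      (∀ n, IsRevMC (P n) (pi n)) →
      (ContCutoff P pi ↔ LazyCutoff P pi) := by
  intro Ω _ _ _ P pi hP
  exact ⟨LazyAux.cont_to_lazy hP, LazyAux.lazy_to_cont hP⟩
end
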